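/- arXiv:1906.04773 — 3 statements merged into one kernel-verified Lean document; each statement's English description precedes it below -/
import Mathlib

section
/- Let B be a topological space and let A, X be spaces over B whose structure maps to B are Hurewicz fibrations. Then every map i : A → X over B that is an h-cofibration is an f-cofibration over B. -/
open unitInterval Topology

/-- A continuous map `p : X → B` is a *Hurewicz fibration* if the map
`C([0,1],X) → X ×_B C([0,1],B)`, `γ ↦ (γ 0, p ∘ γ)`, admits a continuous section, i.e. there
is a continuous path-lifting function. -/
def IsHurewiczFibration {X B : Type*} [TopologicalSpace X] [TopologicalSpace B]
    (p : C(X, B)) : Prop :=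
  ∃ s : C({q : X × C(I, B) // p q.1 = q.2 0}, C(I, X)),
    ∀ q : {q : X × C(I, B) // p q.1 = q.2 0},
      s q 0 = q.1.1 ∧ ∀ t : I, p (s q t) = q.1.2 t

/-- A continuous map `i : X → Y` is an *h-cofibration* if it is a closed embedding and
`(Y × {0}) ∪ (i(X) × [0,1])` is a retract of `Y × [0,1]`. -/
def IsHCofibration {X Y : Type*} [TopologicalSpace X] [TopologicalSpace Y]
    (i : C(X, Y)) : Prop :=
  IsClosedEmbedding (⇑i) ∧
  ∃ r : C(Y × I, Y × I),
    (∀ z : Y × I, (r z).2 = 0 ∨ (r z).1 ∈ Set.range ⇑i) ∧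
    ∀ z : Y × I, (z.2 = 0 ∨ z.1 ∈ Set.range ⇑i) → r z = z

/-- A map `i : X → Y` of spaces over `B` (where `pY : Y → B` is the structure map of `Y`)
is an *f-cofibration over `B`* if it is a closed embedding and `(Y × {0}) ∪ (i(X) × [0,1])`
is a retract of `Y × [0,1]` via a retraction commuting with the projections to `B`. -/
def IsFCofibration {X Y B : Type*} [TopologicalSpace X] [TopologicalSpace Y]
    [TopologicalSpace B] (i : C(X, Y)) (pY : C(Y, B)) : Prop :=
  IsClosedEmbedding (⇑i) ∧
  ∃ r : C(Y × I, Y × I),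
    (∀ z : Y × I, (r z).2 = 0 ∨ (r z).1 ∈ Set.range ⇑i) ∧
    (∀ z : Y × I, (z.2 = 0 ∨ z.1 ∈ Set.range ⇑i) → r z = z) ∧
    ∀ z : Y × I, pY (r z).1 = pY z.1

/-!
The mapping cylinder `M = X × {0} ∪ i(A) × [0,1]` is itself a Hurewicz fibration over `B`: a path
in `B` is lifted from `(i a, s)` by moving down in `i(A) × [0,1]` at unit speed along a lift to `A`,
and by continuing with a lift to `X × {0}` once level zero is reached. An h-cofibration provides a
deformation of `X × [0,1]` that carries each point `y` into `M` at a time `ψ y`, where `ψ` vanishes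
on `M`. Lifting to `M` the reversed track in `B`, from the point where `y` lands and for a time
`ψ y`, corrects this to a point of `M` over the same point of `B` as `y`; nothing moves on `M`.
-/

section TruncatedArithmetic

/-- Subtraction in the unit interval, truncated at zero. -/
noncomputable def truncSub (s t : I) : I := Set.projIcc 0 1 zero_le_one ((s : ℝ) - t)

/-- Addition in the unit interval, truncated at one. -/
noncomputable def truncAdd (s t : I) : I := Set.projIcc 0 1 zero_le_one ((s : ℝ) + t)

@[fun_prop]
lemma continuous_truncSub : Continuous fun w : I × I => truncSub w.1 w.2 :=
  continuous_projIcc.comp (by fun_prop)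

@[fun_prop]
lemma continuous_truncAdd : Continuous fun w : I × I => truncAdd w.1 w.2 :=
  continuous_projIcc.comp (by fun_prop)

lemma truncSub_zero (s : I) : truncSub s 0 = s := by simp [truncSub]

lemma truncSub_eq_zero {s t : I} (h : s ≤ t) : truncSub s t = 0 :=
  Set.projIcc_of_le_left _ (sub_nonpos.2 h)

lemma truncAdd_zero (s : I) : truncAdd s 0 = s := by simp [truncAdd]

lemma truncAdd_truncSub {s t : I} (h : s ≤ t) : truncAdd s (truncSub t s) = t := by
  have hmem : (t : ℝ) - s ∈ Set.Icc (0 : ℝ) 1 :=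
    ⟨sub_nonneg.2 h, (sub_le_self _ s.2.1).trans t.2.2⟩
  simp [truncAdd, truncSub, Set.projIcc_of_mem _ hmem]

end TruncatedArithmetic

namespace IsHurewiczFibration

universe u v

variable {A X Y Z B : Type*} [TopologicalSpace A] [TopologicalSpace X] [TopologicalSpace Y]
  [TopologicalSpace Z] [TopologicalSpace B]

lemma exists_lift {p : C(X, B)} (hp : IsHurewiczFibration p) (f : C(Z, X)) (H : C(Z × I, B))
    (hf : ∀ z, p (f z) = H (z, 0)) :
    ∃ F : C(Z × I, X), (∀ z, F (z, 0) = f z) ∧ ∀ w, p (F w) = H w := by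
  obtain ⟨s, hs⟩ := hp
  let q : C(Z, {q : X × C(I, B) // p q.1 = q.2 0}) :=
    ⟨fun z => ⟨(f z, H.curry z), hf z⟩, by fun_prop⟩
  exact ⟨(s.comp q).uncurry, fun z => (hs (q z)).1, fun w => (hs (q w.1)).2 w.2⟩

lemma of_exists_lift {X : Type u} {B : Type v} [TopologicalSpace X] [TopologicalSpace B]
    {p : C(X, B)}
    (h : ∀ {Z : Type (max u v)} [TopologicalSpace Z] (f : C(Z, X)) (H : C(Z × I, B)),
      (∀ z, p (f z) = H (z, 0)) →
        ∃ F : C(Z × I, X), (∀ z, F (z, 0) = f z) ∧ ∀ w, p (F w) = H w) :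
    IsHurewiczFibration p := by
  obtain ⟨F, hF0, hF⟩ := h (Z := {q : X × C(I, B) // p q.1 = q.2 0})
    ⟨fun q => q.1.1, by fun_prop⟩ ⟨fun w => w.1.1.2 w.2, by fun_prop⟩ fun q => q.2
  exact ⟨F.curry, fun q => ⟨hF0 q, fun t => hF (q, t)⟩⟩

lemma comp_homeomorph {p : C(X, B)} (hp : IsHurewiczFibration p) (e : Y ≃ₜ X) :
    IsHurewiczFibration (p.comp (e : C(Y, X))) := by
  refine of_exists_lift fun f H hf => ?_
  obtain ⟨F, hF0, hF⟩ := hp.exists_lift ((e : C(Y, X)).comp f) H hf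
  exact ⟨(e.symm : C(X, Y)).comp F, fun z => by simp [hF0], fun w => by simp [hF]⟩

lemma restrict_range {pA : C(A, B)} (hpA : IsHurewiczFibration pA) {pX : C(X, B)} {i : C(A, X)}
    (hi : IsEmbedding i) (hover : ∀ a, pX (i a) = pA a) :
    IsHurewiczFibration (pX.restrict (Set.range i)) := by
  convert hpA.comp_homeomorph hi.toHomeomorph.symm using 1
  ext x
  obtain ⟨a, rfl⟩ := hi.toHomeomorph.surjective x
  simp [hover]

lemma exists_lift_extending {p : C(X, B)} (hp : IsHurewiczFibration p) (H : C(Z × I, B))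
    (τ : C(Z, I)) {β : Z × I → X} (hβ : ContinuousOn β {w | w.2 ≤ τ w.1})
    (hβH : ∀ w, w.2 ≤ τ w.1 → p (β w) = H w) :
    ∃ F : C(Z × I, X), (∀ w, w.2 ≤ τ w.1 → F w = β w) ∧ ∀ w, p (F w) = H w := by
  let endpoint : C(Z, X) :=
    ⟨fun z => β (z, τ z), hβ.comp_continuous (by fun_prop) fun z => le_refl (τ z)⟩
  obtain ⟨L, hL0, hL⟩ := hp.exists_lift endpoint
    (H.comp ⟨fun w => (w.1, truncAdd (τ w.1) w.2), by fun_prop⟩)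
    fun z => by simp [endpoint, truncAdd_zero, hβH]
  have hglue : ∀ w : Z × I, w.2 = τ w.1 → β w = L (w.1, truncSub w.2 (τ w.1)) := by
    rintro ⟨z, t⟩ (rfl : t = τ z)
    simp [truncSub_eq_zero le_rfl, hL0, endpoint]
  refine ⟨⟨fun w => if w.2 ≤ τ w.1 then β w else L (w.1, truncSub w.2 (τ w.1)),
    continuous_if_le (by fun_prop) (by fun_prop) hβ (by fun_prop) hglue⟩,
    fun w hw => if_pos hw, fun w => ?_⟩
  by_cases hw : w.2 ≤ τ w.1
  · simp [hw, hβH]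
  · simp [hw, hL, truncAdd_truncSub (le_of_not_ge hw)]

end IsHurewiczFibration

section MappingCylinder

variable {X Z B : Type*} [TopologicalSpace X] [TopologicalSpace Z] [TopologicalSpace B]

/-- The mapping cylinder `(X × {0}) ∪ (C × [0,1])` of the inclusion of a subset `C` of `X`, as a
subset of `X × [0,1]`; for a map `i` that is an embedding, `C` is the range of `i`. -/
def mappingCylinder (C : Set X) : Set (X × I) := {z | z.2 = 0 ∨ z.1 ∈ C}

namespace IsHurewiczFibration

lemma exists_lift_on_mappingCylinder {p : C(X, B)} {C : Set X}
    (hpC : IsHurewiczFibration (p.restrict C)) (hC : IsClosed C) (f : C(Z, X)) (H : C(Z × I, B))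
    (hf : ∀ z, p (f z) = H (z, 0)) :
    ∃ β : Z × I → X, ContinuousOn β (mappingCylinder (f ⁻¹' C)) ∧ (∀ z, β (z, 0) = f z) ∧
      (∀ w ∈ mappingCylinder (f ⁻¹' C), p (β w) = H w) ∧ ∀ w, f w.1 ∈ C → β w ∈ C := by
  let e : C((f ⁻¹' C) × I, Z × I) := ⟨Prod.map (↑) id, by fun_prop⟩
  have he : IsClosedEmbedding e :=
    (hC.preimage f.continuous).isClosedEmbedding_subtypeVal.prodMap .id
  obtain ⟨α, hα0, hα⟩ := hpC.exists_lift (f.restrictPreimage C) (H.comp e) fun z => hf z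
  let β : Z × I → X := Function.extend e (fun w => (α w : X)) fun w => f w.1
  have hβe (z : Z) (hz : f z ∈ C) (t : I) : β (z, t) = α (⟨z, hz⟩, t) :=
    he.injective.extend_apply _ _ (⟨z, hz⟩, t)
  have hβ0 (z : Z) : β (z, 0) = f z := by
    by_cases hz : f z ∈ C
    · rw [hβe z hz, hα0]; rfl
    · refine Function.extend_apply' _ _ _ fun ⟨w, hw⟩ => hz ?_
      obtain rfl : (w.1 : Z) = z := congrArg Prod.fst hw
      exact w.1.2
  refine ⟨β, ?_, hβ0, ?_, fun ⟨z, t⟩ hz => hβe z hz t ▸ (α _).2⟩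
  · have hbottom : ContinuousOn β {w | w.2 = 0} :=
      (f.continuous.comp continuous_fst).continuousOn.congr <| by rintro ⟨z, _⟩ rfl; exact hβ0 z
    have hsides : ContinuousOn β (Set.range e) := by
      rw [← Set.image_univ, he.isInducing.continuousOn_image_iff,
        show β ∘ e = fun w => (α w : X) from Function.extend_comp he.injective _ _]
      fun_prop
    refine (hbottom.union_of_isClosed hsides (isClosed_eq continuous_snd continuous_const)
      he.isClosed_range).mono ?_
    exact Set.union_subset_union_right _ fun w hw => ⟨(⟨w.1, hw⟩, w.2), rfl⟩
  · rintro ⟨z, t⟩ (rfl | hz)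
    · rw [hβ0, hf]
    · rw [hβe z hz]; exact hα _

theorem restrict_mappingCylinder {p : C(X, B)} (hp : IsHurewiczFibration p) {C : Set X}
    (hpC : IsHurewiczFibration (p.restrict C)) (hC : IsClosed C) :
    IsHurewiczFibration ((p.comp .fst).restrict (mappingCylinder C)) := by
  refine of_exists_lift fun {Z} _ m H hm => ?_
  let f : C(Z, X) := ⟨fun z => (m z).1.1, by fun_prop⟩
  let τ : C(Z, I) := ⟨fun z => (m z).1.2, by fun_prop⟩
  obtain ⟨β, hβ, hβ0, hβH, hβC⟩ := hpC.exists_lift_on_mappingCylinder hC f H hm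
  have hτ (w : Z × I) (hw : w.2 ≤ τ w.1) : w ∈ mappingCylinder (f ⁻¹' C) :=
    (m w.1).2.imp_left fun h0 => le_antisymm (hw.trans_eq h0) w.2.2.1
  obtain ⟨F, hFβ, hFH⟩ := hp.exists_lift_extending H τ (hβ.mono hτ) fun w hw => hβH w (hτ w hw)
  have hmem (w : Z × I) : (F w, truncSub (τ w.1) w.2) ∈ mappingCylinder C := by
    rcases le_or_gt (τ w.1) w.2 with hw | hw
    · exact .inl (truncSub_eq_zero hw)
    · have hfC : f w.1 ∈ C := (m w.1).2.resolve_left (unitInterval.nonneg'.trans_lt hw).ne'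
      exact .inr (hFβ w hw.le ▸ hβC w hfC)
  refine ⟨⟨fun w => ⟨_, hmem w⟩, by fun_prop⟩, fun z => Subtype.ext (Prod.ext ?_ ?_), hFH⟩
  · exact (hFβ (z, 0) (τ z).2.1).trans (hβ0 z)
  · exact truncSub_zero (τ z)

end IsHurewiczFibration

end MappingCylinder

theorem IsHurewiczFibration.exists_retraction_over {Y B : Type*} [TopologicalSpace Y]
    [TopologicalSpace B] {q : C(Y, B)} {M : Set Y} (hM : IsHurewiczFibration (q.restrict M))
    (G : C(Y × I, Y)) (hG0 : ∀ y, G (y, 0) = y) (ψ : C(Y, I)) (hψ : ∀ y ∈ M, ψ y = 0)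
    (hGM : ∀ y, G (y, ψ y) ∈ M) :
    ∃ r : C(Y, Y), (∀ y, r y ∈ M) ∧ (∀ y ∈ M, r y = y) ∧ ∀ y, q (r y) = q y := by
  obtain ⟨F, hF0, hF⟩ := hM.exists_lift ⟨fun y => ⟨G (y, ψ y), hGM y⟩, by fun_prop⟩
    ⟨fun w => q (G (w.1, truncSub (ψ w.1) w.2)), by fun_prop⟩ fun y => by simp [truncSub_zero]
  refine ⟨⟨fun y => F (y, ψ y), by fun_prop⟩, fun y => (F _).2, fun y hy => ?_, fun y => ?_⟩
  · simp [hψ y hy, hF0, hG0]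
  · simpa [truncSub_eq_zero le_rfl, hG0] using hF (y, ψ y)

namespace IsHCofibration

variable {A X : Type*} [TopologicalSpace A] [TopologicalSpace X] {i : C(A, X)}

lemma exists_homotopy (hi : IsHCofibration i) :
    ∃ (h : C(X × I, X)) (φ : C(X, I)), (∀ x, h (x, 0) = x) ∧
      (∀ x ∈ Set.range i, φ x = 0) ∧ ∀ x, φ x < 1 → h (x, φ x) ∈ Set.range i := by
  obtain ⟨hcl, r, hrM, hr⟩ := hi
  let level : C(X, C(I, I)) := (ContinuousMap.snd.comp r).curry
  let φ : C(X, I) := ⟨fun x => ⟨dist (.id I) (level x), dist_nonneg,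
    (ContinuousMap.dist_le zero_le_one).2 fun t => Real.dist_le_of_mem_Icc_01 t.2 (level x t).2⟩,
    by fun_prop⟩
  refine ⟨ContinuousMap.fst.comp r, φ, fun x => ?_, fun x hx => ?_, fun x hx => ?_⟩
  · simp [hr (x, 0) (.inl rfl)]
  · have hlevel : .id I = level x := by
      ext t
      simp [level, hr (x, t) (.inr hx)]
    exact Subtype.ext (dist_eq_zero.2 hlevel)
  · have hclosed : IsClosed {s : I | (r (x, s)).1 ∈ Set.range i} :=
      hcl.isClosed_range.preimage (by fun_prop)
    -- At a time `s > φ x` the level of `r (x, s)` is within `φ x` of `s`, so it is not zero.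
    have hsub : Set.Ioi (φ x) ⊆ {s : I | (r (x, s)).1 ∈ Set.range i} := fun s hs => by
      refine (hrM (x, s)).resolve_left fun h0 => (show φ x < s from hs).not_ge ?_
      calc (s : ℝ) = dist s (level x s) := by
            simp [level, h0, Subtype.dist_eq, abs_of_nonneg s.2.1]
        _ ≤ φ x := ContinuousMap.dist_apply_le_dist (f := .id I) s
    have hclosure := closure_minimal hsub hclosed
    rw [closure_Ioi' (a := φ x) ⟨1, hx⟩] at hclosure
    exact hclosure Set.self_mem_Ici

lemma exists_deformation_mappingCylinder (hi : IsHCofibration i) :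
    ∃ (G : C((X × I) × I, X × I)) (ψ : C(X × I, I)), (∀ y, G (y, 0) = y) ∧
      (∀ y ∈ mappingCylinder (Set.range i), ψ y = 0) ∧
      ∀ y, G (y, ψ y) ∈ mappingCylinder (Set.range i) := by
  obtain ⟨h, φ, h0, hφ, hrange⟩ := hi.exists_homotopy
  refine ⟨⟨fun w => (h (w.1.1, w.2), truncSub w.1.2 w.2), by fun_prop⟩,
    ⟨fun y => min y.2 (φ y.1), by fun_prop⟩, fun y => by simp [h0, truncSub_zero], ?_, fun y => ?_⟩
  · rintro y (hy | hy)
    · simp [hy]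
    · simp [hφ _ hy]
  · rcases le_or_gt y.2 (φ y.1) with hy | hy
    · exact .inl (by simp [min_eq_left hy, truncSub_eq_zero le_rfl])
    · exact .inr (by simpa [min_eq_right hy.le] using hrange y.1 (hy.trans_le y.2.2.2))

end IsHCofibration

/-- **Heath–Kamps.** An h-cofibration `i : A → X` over `B` between spaces whose structure maps
to `B` are Hurewicz fibrations is an f-cofibration over `B`. -/
theorem isFCofibration_of_isHCofibration_of_fibrant
    {B A X : Type*} [TopologicalSpace B] [TopologicalSpace A] [TopologicalSpace X]
    (pA : C(A, B)) (pX : C(X, B))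
    (hpA : IsHurewiczFibration pA) (hpX : IsHurewiczFibration pX)
    (i : C(A, X)) (hover : ∀ a, pX (i a) = pA a)
    (hi : IsHCofibration i) :
    IsFCofibration i pX := by
  have hrange : IsHurewiczFibration (pX.restrict (Set.range i)) :=
    hpA.restrict_range hi.1.isEmbedding hover
  have hcylinder : IsHurewiczFibration ((pX.comp .fst).restrict (mappingCylinder (Set.range i))) :=
    hpX.restrict_mappingCylinder hrange hi.1.isClosed_range
  obtain ⟨G, ψ, hG0, hψ, hGM⟩ := hi.exists_deformation_mappingCylinder
  exact ⟨hi.1, hcylinder.exists_retraction_over G hG0 ψ hψ hGM⟩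
end

section
/- Let i : X → Y be an f-cofibration of spaces over B such that both structure maps p_X : X → B and p_Y : Y → B are Hurewicz fibrations. Then there exists a path-lifting function for p_Y that restricts to one for p_X: a continuous map s : Y ×_B C([0,1],B) → C([0,1],Y) (defined on pairs (y,γ) with p_Y(y) = γ(0)) with s(y,γ)(0) = y and p_Y ∘ s(y,γ) = γ, such that for every x ∈ X and every path γ in B with γ(0) = p_X(x), the lifted path s(i(x),γ) takes all its values in i(X). -/
open unitInterval Topology

/-!
Let `r` be the retraction, `γ` a path in `B` starting at `pY y`, and `(y', a) = r (y, t)`. Since `r`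
is over `B`, `y'` also lies over `γ 0`. If `a ≠ 0`, then `y'` lies in `i(X)`, so the restriction of
`γ` to `[0, min a t]` can be lifted inside `i(X)`, starting at `y'`; if `a = 0` there is nothing to
lift. The fibration `pY` then transports the endpoint along the rest of `γ`, from time `min a t` to
time `t`, and the result is the value at `t` of the new lift of `γ` at `y`. When `y ∈ i(X)`, or when
`t = 0`, we have `a = t`, so the second stage is trivial and the lift does not leave `i(X)`,
respectively starts at `y`.
-/

/-- The self-map `u ↦ min (m + u) 1` of `[0,1]`, depending continuously on `m`. Precomposing a path
with it gives the part of the path after time `m`, run at unit speed and then stopped. -/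
noncomputable def unitIntervalShift : C(I, C(I, I)) :=
  ContinuousMap.curry ⟨fun v => Set.projIcc (0 : ℝ) 1 zero_le_one (v.1 + v.2),
    continuous_projIcc.comp (by fun_prop)⟩

lemma unitIntervalShift_apply (m u : I) :
    unitIntervalShift m u = Set.projIcc (0 : ℝ) 1 zero_le_one (m + u) :=
  rfl

lemma unitIntervalShift_zero_right (m : I) : unitIntervalShift m 0 = m := by
  simp [unitIntervalShift_apply]

lemma unitIntervalShift_of_add_eq {m u t : I} (h : (m + u : ℝ) = t) :
    unitIntervalShift m u = t := by
  rw [unitIntervalShift_apply, h, Set.projIcc_val]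

/-- The space `X ×_B C([0,1],B)` of path-lifting problems for `p : X → B`: a path in the base
together with a point over its start. -/
abbrev PathLiftingProblem {X B : Type*} [TopologicalSpace X] [TopologicalSpace B] (p : C(X, B)) :=
  {q : X × C(I, B) // p q.1 = q.2 0}

section Transport

variable {B X Y Z : Type*} [TopologicalSpace B] [TopologicalSpace X] [TopologicalSpace Y]
  [TopologicalSpace Z]

lemma IsHurewiczFibration.exists_transport {p : C(X, B)} (hp : IsHurewiczFibration p)
    (γ : C(Z, C(I, B))) {m t : C(Z, I)} (hmt : ∀ z, m z ≤ t z)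
    (f : C(Z, X)) (hf : ∀ z, p (f z) = γ z (m z)) :
    ∃ g : C(Z, X), (∀ z, p (g z) = γ z (t z)) ∧ ∀ z, m z = t z → g z = f z := by
  obtain ⟨l, hl⟩ := hp
  -- The lift of a constant path need not be constant, so the tail of `γ z` is run at unit speed and
  -- its lift evaluated after the elapsed time `t z - m z`, which vanishes when `m z = t z`.
  let tail : C(Z, C(I, B)) := ⟨fun z => (γ z).comp (unitIntervalShift (m z)),
    γ.continuous.compCM (unitIntervalShift.continuous.comp m.continuous)⟩
  have tail_zero : ∀ z, p (f z) = tail z 0 := fun z => by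
    rw [hf]
    exact congrArg (γ z) (unitIntervalShift_zero_right _).symm
  let duration : C(Z, I) :=
    ⟨fun z => ⟨t z - m z, sub_nonneg.2 (hmt z), by linarith [(t z).2.2, (m z).2.1]⟩, by fun_prop⟩
  have tail_duration : ∀ z, tail z (duration z) = γ z (t z) := fun z =>
    congrArg (γ z) (unitIntervalShift_of_add_eq (add_sub_cancel _ _))
  let problem : C(Z, PathLiftingProblem p) :=
    ⟨fun z => ⟨(f z, tail z), tail_zero z⟩, by fun_prop⟩
  let lift : C(Z, C(I, X)) := l.comp problem
  refine ⟨⟨fun z => lift z (duration z), by fun_prop⟩, fun z => ?_, fun z hz => ?_⟩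
  · exact ((hl _).2 _).trans (tail_duration z)
  · have duration_eq_zero : duration z = 0 := Subtype.ext (sub_eq_zero.2 (congrArg _ hz.symm))
    exact (congrArg (lift z) duration_eq_zero).trans (hl _).1

lemma exists_continuousMap_eq_of_isClosed_cover {S T : Set Z} (hS : IsClosed S) (hT : IsClosed T)
    (hST : ∀ z, z ∈ S ∨ z ∈ T) (f : C(S, Y)) (g : C(T, Y))
    (hfg : ∀ z (hzS : z ∈ S) (hzT : z ∈ T), f ⟨z, hzS⟩ = g ⟨z, hzT⟩) :
    ∃ h : C(Z, Y), (∀ z : S, h z = f z) ∧ ∀ z : T, h z = g z := by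
  classical
  let h : Z → Y := fun z => if hz : z ∈ S then f ⟨z, hz⟩ else g ⟨z, (hST z).resolve_left hz⟩
  have h_S : ∀ z : S, h z = f z := fun z => dif_pos z.2
  have h_T : ∀ z : T, h z = g z := fun z => by
    by_cases hz : z.1 ∈ S
    · exact (h_S ⟨z, hz⟩).trans (hfg z hz z.2)
    · exact dif_neg hz
  refine ⟨⟨h, ?_⟩, h_S, h_T⟩
  rw [← continuousOn_univ, ← Set.eq_univ_of_forall (s := S ∪ T) hST]
  refine ContinuousOn.union_of_isClosed ?_ ?_ hS hT
  · exact continuousOn_iff_continuous_domRestrict.2 (f.continuous.congr fun z => (h_S z).symm)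
  · exact continuousOn_iff_continuous_domRestrict.2 (g.continuous.congr fun z => (h_T z).symm)

lemma IsHurewiczFibration.exists_transport_in_range {pX : C(X, B)} {pY : C(Y, B)}
    (hpX : IsHurewiczFibration pX) {i : C(X, Y)} (hover : ∀ x, pY (i x) = pX x)
    (hi : IsClosedEmbedding i) (γ : C(Z, C(I, B))) (m : C(Z, I)) (w : C(Z, Y))
    (hw : ∀ z, pY (w z) = γ z 0) (hmw : ∀ z, m z = 0 ∨ w z ∈ Set.range i) :
    ∃ g : C(Z, Y), (∀ z, pY (g z) = γ z (m z)) ∧ (∀ z, m z = 0 → g z = w z) ∧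
      ∀ z, w z ∈ Set.range i → g z ∈ Set.range i := by
  let S : Set Z := {z | w z ∈ Set.range i}
  let T : Set Z := {z | m z = 0}
  have hS : IsClosed S := hi.isClosed_range.preimage w.continuous
  have hT : IsClosed T := isClosed_singleton.preimage m.continuous
  choose x hx using fun z : S => z.2
  have x_continuous : Continuous x :=
    hi.isEmbedding.continuous_iff.2 ((w.continuous.comp continuous_subtype_val).congr
      fun z => (hx z).symm)
  obtain ⟨k, k_lifts, k_eq⟩ := hpX.exists_transport (γ.restrict S) (m := .const S 0)
    (t := m.restrict S) (fun _ => nonneg') ⟨x, x_continuous⟩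
    fun z => ((hover _).symm.trans (congrArg pY (hx z))).trans (hw z)
  obtain ⟨g, g_S, g_T⟩ := exists_continuousMap_eq_of_isClosed_cover hS hT
    (fun z => (hmw z).symm) (i.comp k) (w.restrict T)
    fun z hzS hzT => (congrArg i (k_eq ⟨z, hzS⟩ hzT.symm)).trans (hx ⟨z, hzS⟩)
  refine ⟨g, fun z => ?_, fun z hz => g_T ⟨z, hz⟩, fun z hz => ⟨_, (g_S ⟨z, hz⟩).symm⟩⟩
  rcases hmw z with hz | hz
  · rw [g_T ⟨z, hz⟩, hz]
    exact hw z
  · rw [g_S ⟨z, hz⟩]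
    exact (hover _).trans (k_lifts ⟨z, hz⟩)

end Transport

/-- **Dold's lemma.** If `i : X → Y` is an f-cofibration of spaces over `B` whose structure
maps are Hurewicz fibrations, then the path-lifting function for `pY` can be chosen so that it
restricts to a path-lifting function for `pX`, i.e. paths starting in `i(X)` lift into `i(X)`. -/
theorem exists_pathLifting_restricting
    {B X Y : Type*} [TopologicalSpace B] [TopologicalSpace X] [TopologicalSpace Y]
    (pX : C(X, B)) (pY : C(Y, B))
    (hpX : IsHurewiczFibration pX) (hpY : IsHurewiczFibration pY)
    (i : C(X, Y)) (hover : ∀ x, pY (i x) = pX x)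
    (hi : IsFCofibration i pY) :
    ∃ s : C({q : Y × C(I, B) // pY q.1 = q.2 0}, C(I, Y)),
      (∀ q, s q 0 = q.1.1) ∧
      (∀ q (t : I), pY (s q t) = q.1.2 t) ∧
      ∀ (x : X) (γ : C(I, B)) (hγ : γ 0 = pX x) (t : I),
        s ⟨(i x, γ), by rw [hover x, hγ]⟩ t ∈ Set.range ⇑i := by
  obtain ⟨hemb, r, hr, hrfix, hrB⟩ := hi
  let γ : C(PathLiftingProblem pY × I, C(I, B)) := ⟨fun z => z.1.1.2, by fun_prop⟩
  let w : C(PathLiftingProblem pY × I, Y) := ⟨fun z => (r (z.1.1.1, z.2)).1, by fun_prop⟩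
  let m : C(PathLiftingProblem pY × I, I) := ⟨fun z => min (r (z.1.1.1, z.2)).2 z.2, by fun_prop⟩
  obtain ⟨g, g_lifts, g_start, g_range⟩ := hpX.exists_transport_in_range hover hemb γ m w
    (fun z => (hrB _).trans z.1.2)
    fun z => (hr (z.1.1.1, z.2)).imp_left fun h => by simp [m, h]
  obtain ⟨s, s_lifts, s_eq⟩ := hpY.exists_transport γ (m := m) (t := .snd)
    (fun z => min_le_right _ _) g g_lifts
  refine ⟨s.curry, fun q => ?_, fun q t => s_lifts (q, t), fun x γ hγ t => ?_⟩
  · have hm : m (q, 0) = 0 := min_eq_right nonneg'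
    have hw : w (q, 0) = q.1.1 := congrArg Prod.fst (hrfix (q.1.1, 0) (Or.inl rfl))
    exact ((s_eq (q, 0) hm).trans (g_start (q, 0) hm)).trans hw
  · have hfix : r (i x, t) = (i x, t) := hrfix _ (Or.inr ⟨x, rfl⟩)
    have hm : m (⟨(i x, γ), by rw [hover x, hγ]⟩, t) = t := by simp [m, hfix]
    rw [ContinuousMap.curry_apply, s_eq _ hm]
    exact g_range _ ⟨x, (congrArg Prod.fst hfix).symm⟩
end

section
/- Let X be a retractive space over A whose section i_X is an h-cofibration, and let g : Y → Y' be a map of retractive spaces over B whose sections i_Y, i_{Y'} are h-cofibrations. If g is a weak equivalence, then id_X ⊼ g : X ⊼ Y → X ⊼ Y' is a weak equivalence of retractive spaces over A × B. -/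
open unitInterval Topology

/-- The map induced by `f` on path components. -/
def inducedZerothHomotopy {X Y : Type*} [TopologicalSpace X] [TopologicalSpace Y]
    (f : C(X, Y)) : ZerothHomotopy X → ZerothHomotopy Y :=
  Quotient.map' f (fun _ _ h => Nonempty.map (fun p => p.map f.continuous) h)

/-- The map induced by `f` on generalized loops. -/
def inducedGenLoop {N : Type*} {X Y : Type*} [TopologicalSpace X] [TopologicalSpace Y]
    (f : C(X, Y)) {x : X} (p : GenLoop N X x) : GenLoop N Y (f x) :=
  ⟨f.comp p.1, fun y hy => by
    simp only [ContinuousMap.comp_apply]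
    rw [p.2 y hy]⟩

/-- The map induced by `f : X → Y` on homotopy groups `π_N(X, x) → π_N(Y, f x)`. -/
def inducedHomotopyGroup (N : Type*) {X Y : Type*} [TopologicalSpace X] [TopologicalSpace Y]
    (f : C(X, Y)) (x : X) : HomotopyGroup N X x → HomotopyGroup N Y (f x) :=
  Quotient.map' (inducedGenLoop f)
    (fun p q h => by
      obtain ⟨H⟩ := h
      exact ⟨{ toContinuousMap := f.comp H.toContinuousMap
               map_zero_left := fun y => congrArg f (H.map_zero_left y)
               map_one_left := fun y => congrArg f (H.map_one_left y)
               prop' := fun t y hy => congrArg f (H.prop' t y hy) }⟩)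

/-- A continuous map is a *weak homotopy equivalence* if it induces a bijection on path
components and bijections on all homotopy groups at every basepoint. -/
def IsWeakHomotopyEquiv {X Y : Type*} [TopologicalSpace X] [TopologicalSpace Y]
    (f : C(X, Y)) : Prop :=
  Function.Bijective (inducedZerothHomotopy f) ∧
  ∀ (n : ℕ) (x : X), Function.Bijective (inducedHomotopyGroup (Fin n) f x)

section ExtSmash

variable {A B X Y : Type*} [TopologicalSpace A] [TopologicalSpace B]
  [TopologicalSpace X] [TopologicalSpace Y]

/-- The relation generating the external smash product `X ⊼ Y` of a retractive space `X` over
`A` and a retractive space `Y` over `B`: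
`(x, i_Y b) ∼ (i_X (p_X x), i_Y b)` and `(i_X a, y) ∼ (i_X a, i_Y (p_Y y))`. -/
def SmashRel (iX : C(A, X)) (pX : C(X, A)) (iY : C(B, Y)) (pY : C(Y, B)) :
    X × Y → X × Y → Prop := fun z w =>
  (∃ x b, z = (x, iY b) ∧ w = (iX (pX x), iY b)) ∨
  (∃ a y, z = (iX a, y) ∧ w = (iX a, iY (pY y)))

/-- The total space of the external smash product `X ⊼ Y`. -/
abbrev ExtSmash (iX : C(A, X)) (pX : C(X, A)) (iY : C(B, Y)) (pY : C(Y, B)) : Type _ :=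
  Quot (SmashRel iX pX iY pY)

/-- The basepoint section of `X ⊼ Y` over `A × B`. -/
def extSmashSection (iX : C(A, X)) (pX : C(X, A)) (iY : C(B, Y)) (pY : C(Y, B)) :
    C(A × B, ExtSmash iX pX iY pY) :=
  ⟨fun ab => Quot.mk _ (iX ab.1, iY ab.2), continuous_quot_mk.comp (by fun_prop)⟩

/-- The projection of `X ⊼ Y` to `A × B`, induced by `p_X × p_Y`. -/
def extSmashProj (iX : C(A, X)) (pX : C(X, A)) (iY : C(B, Y)) (pY : C(Y, B))
    (hX : ∀ a, pX (iX a) = a) (hY : ∀ b, pY (iY b) = b) :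
    C(ExtSmash iX pX iY pY, A × B) :=
  ⟨Quot.lift (fun z => (pX z.1, pY z.2))
      (by rintro z w (⟨x, b, rfl, rfl⟩ | ⟨a, y, rfl, rfl⟩) <;> simp [hX, hY]),
    continuous_quot_lift _ (by fun_prop)⟩

end ExtSmash

section ExtSmashMap

variable {A B X X' Y Y' : Type*} [TopologicalSpace A] [TopologicalSpace B]
  [TopologicalSpace X] [TopologicalSpace X'] [TopologicalSpace Y] [TopologicalSpace Y']

/-- The map `f ⊼ g : X ⊼ Y → X' ⊼ Y'` induced on external smash products by maps of
retractive spaces `f : X → X'` over `A` and `g : Y → Y'` over `B`. -/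
def extSmashMap (iX : C(A, X)) (pX : C(X, A)) (iY : C(B, Y)) (pY : C(Y, B))
    (iX' : C(A, X')) (pX' : C(X', A)) (iY' : C(B, Y')) (pY' : C(Y', B))
    (f : C(X, X')) (g : C(Y, Y'))
    (hfi : ∀ a, f (iX a) = iX' a) (hfp : ∀ x, pX' (f x) = pX x)
    (hgi : ∀ b, g (iY b) = iY' b) (hgp : ∀ y, pY' (g y) = pY y) :
    C(ExtSmash iX pX iY pY, ExtSmash iX' pX' iY' pY') :=
  ⟨Quot.lift (fun z => Quot.mk _ (f z.1, g z.2))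
      (by
        rintro z w (⟨x, b, rfl, rfl⟩ | ⟨a, y, rfl, rfl⟩) <;> apply Quot.sound
        · exact Or.inl ⟨f x, b, by rw [hgi], by rw [hgi, hfi, hfp]⟩
        · exact Or.inr ⟨a, g y, by rw [hfi], by rw [hfi, hgi, hgp]⟩),
    continuous_quot_lift _ (continuous_quot_mk.comp (by fun_prop))⟩

end ExtSmashMap

/-!
`X ⊼ Y` is the pushout of `A × B ← W → X × Y`, where `W = X × i_Y(B) ∪ i_X(A) × Y` includes in
`X × Y` as an h-cofibration (the pushout product), and `W` is itself the pushout of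
`X × B ← A × B → A × Y`. Two applications of the gluing lemma for pushouts along h-cofibrations
therefore reduce the claim to products of weak equivalences.

For the gluing lemma, the pushout along an h-cofibration is homotopy equivalent to the double
mapping cylinder. This is covered by two open sets which deform, as does their intersection, onto
the three spaces of the diagram, and a map that is a weak equivalence over all finite intersections
of an open cover is one: a map of a cube is lifted up to homotopy cell by cell over a grid so fine
that each cell lands in one member of the cover, with every homotopy confined to the intersection
of the members containing the image of its cell.
-/

section HomotopyExtension

variable {K K' X Y Z : Type*} [TopologicalSpace K] [TopologicalSpace K'] [TopologicalSpace X]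
  [TopologicalSpace Y] [TopologicalSpace Z]

theorem homotopicRel_iff {S : Set K} {f g : C(K, Z)} :
    f.HomotopicRel g S ↔ ∃ F : C(K × I, Z), (∀ x, F (x, 0) = f x) ∧ (∀ x, F (x, 1) = g x) ∧
      ∀ x ∈ S, ∀ t, F (x, t) = f x := by
  constructor
  · rintro ⟨F⟩
    exact ⟨F.toContinuousMap.comp .prodSwap, F.map_zero_left, F.map_one_left,
      fun x hx t => F.prop' t x hx⟩
  · rintro ⟨F, h0, h1, hS⟩
    exact ⟨{ toContinuousMap := F.comp .prodSwap, map_zero_left := h0, map_one_left := h1,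
             prop' := fun t x hx => hS x hx t }⟩

theorem exists_glue {P Q : Set K} (hP : IsClosed P) (hQ : IsClosed Q)
    (hPQ : ∀ x, x ∈ P ∨ x ∈ Q) (u : C(P, Z)) (v : C(Q, Z))
    (h : ∀ x (hp : x ∈ P) (hq : x ∈ Q), u ⟨x, hp⟩ = v ⟨x, hq⟩) :
    ∃ w : C(K, Z), (∀ x (hx : x ∈ P), w x = u ⟨x, hx⟩) ∧ ∀ x (hx : x ∈ Q), w x = v ⟨x, hx⟩ := by
  classical
  let w : K → Z := fun x => if hx : x ∈ P then u ⟨x, hx⟩ else v ⟨x, (hPQ x).resolve_left hx⟩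
  have hwP : ∀ x (hx : x ∈ P), w x = u ⟨x, hx⟩ := fun x hx => dif_pos hx
  have hwQ : ∀ x (hx : x ∈ Q), w x = v ⟨x, hx⟩ := fun x hx => by
    by_cases hp : x ∈ P
    · rw [hwP x hp, h x hp hx]
    · exact dif_neg hp
  refine ⟨⟨w, ?_⟩, hwP, hwQ⟩
  rw [← continuousOn_univ, ← Set.eq_univ_of_forall (s := P ∪ Q) hPQ]
  refine ContinuousOn.union_of_isClosed ?_ ?_ hP hQ <;>
    rw [continuousOn_iff_continuous_domRestrict]
  · exact u.continuous.congr fun x => (hwP x x.2).symm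
  · exact v.continuous.congr fun x => (hwQ x x.2).symm

/-- A subset `S` of `K` has the *homotopy extension property* if it is closed and
`K × {0} ∪ S × I` is a retract of `K × I`: the inclusion of `S` is an h-cofibration. -/
def HasHEP (S : Set K) : Prop :=
  IsClosed S ∧ ∃ r : C(K × I, K × I),
    (∀ z, (r z).2 = 0 ∨ (r z).1 ∈ S) ∧ ∀ z, (z.2 = 0 ∨ z.1 ∈ S) → r z = z

theorem isHCofibration_iff {i : C(X, Y)} :
    IsHCofibration i ↔ IsClosedEmbedding i ∧ HasHEP (Set.range i) :=
  ⟨fun h => ⟨h.1, h.1.isClosed_range, h.2⟩, fun h => ⟨h.1, h.2.2⟩⟩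

namespace HasHEP

variable {S : Set K}

theorem exists_homotopy_extension (hS : HasHEP S) (β : C(K, Z)) (a : C(S × I, Z))
    (h : ∀ x : S, a (x, 0) = β x) :
    ∃ b : C(K × I, Z), (∀ x, b (x, 0) = β x) ∧ ∀ (x : S) t, b (x, t) = a (x, t) := by
  obtain ⟨hcl, r, hr, hr'⟩ := hS
  have hr1 : Continuous fun z => (r z).1 := by fun_prop
  have hr2 : Continuous fun z => (r z).2 := by fun_prop
  obtain ⟨b, hb0, hbS⟩ := exists_glue (P := {z | (r z).2 = 0}) (Q := {z | (r z).1 ∈ S})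
    (isClosed_singleton.preimage hr2) (hcl.preimage hr1) hr
    ⟨fun z => β (r z).1, by fun_prop⟩ ⟨fun z => a (⟨(r z).1, z.2⟩, (r z).2), by fun_prop⟩
    (fun z (hz : (r z).2 = 0) hz' => by
      simpa only [ContinuousMap.coe_mk, hz] using (h ⟨(r z).1, hz'⟩).symm)
  refine ⟨b, fun x => ?_, fun x t => ?_⟩
  · have hx := hr' (x, 0) (.inl rfl)
    simp [hb0 (x, 0) (congrArg Prod.snd hx), hx]
  · have hx := hr' (x, t) (.inr x.2)
    simp [hbS (x, t) ((congrArg Prod.fst hx).symm ▸ x.2 : _ ∈ S), hx]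

theorem exists_homotopy_extension_one (hS : HasHEP S) (β : C(K, Z)) (a : C(S × I, Z))
    (h : ∀ x : S, a (x, 1) = β x) :
    ∃ b : C(K × I, Z), (∀ x, b (x, 1) = β x) ∧ ∀ (x : S) t, b (x, t) = a (x, t) := by
  obtain ⟨b, hb0, hbS⟩ := hS.exists_homotopy_extension β
    (a.comp ⟨fun p => (p.1, σ p.2), by fun_prop⟩) (fun x => by simp [h])
  exact ⟨b.comp ⟨fun p => (p.1, σ p.2), by fun_prop⟩, fun x => by simp [hb0],
    fun x t => by simp [hbS]⟩

theorem of_homeomorph (e : K ≃ₜ K') {S' : Set K'} (h : HasHEP (e ⁻¹' S')) : HasHEP S' := by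
  obtain ⟨hcl, r, hr, hr'⟩ := h
  refine ⟨(e.isClosed_preimage).1 hcl,
    ⟨fun z => (e (r (e.symm z.1, z.2)).1, (r (e.symm z.1, z.2)).2), by fun_prop⟩,
    fun z => hr _, fun z hz => ?_⟩
  have hz' := hr' (e.symm z.1, z.2) (hz.imp_right fun h => by simpa using h)
  simp [hz']

theorem empty : HasHEP (∅ : Set K) :=
  ⟨isClosed_empty, ⟨fun z => (z.1, 0), by fun_prop⟩, fun _ => .inl rfl,
    fun z hz => Prod.ext rfl (hz.resolve_right id).symm⟩

/-- The function `φ` measures how long `H` takes to push a point into `S`: it is the maximum over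
`t` of `t - (r (x, t)).2`. -/
theorem exists_deformation (hS : HasHEP S) :
    ∃ (H : C(K × I, K)) (φ : C(K, I)), (∀ x, H (x, 0) = x) ∧ (∀ x ∈ S, ∀ t, H (x, t) = x) ∧
      (∀ x ∈ S, φ x = 0) ∧ ∀ x t, φ x ≤ t → φ x < 1 → H (x, t) ∈ S := by
  obtain ⟨hcl, r, hr, hr'⟩ := hS
  let k : K → I → ℝ := fun x t => t - (r (x, t)).2
  have hk : Continuous fun p : K × I => k p.1 p.2 := by
    change Continuous fun p : K × I => (p.2 : ℝ) - (r p).2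
    fun_prop
  let φ : K → ℝ := fun x => sSup (k x '' Set.univ)
  have hφc : Continuous φ := isCompact_univ.continuous_sSup hk
  have hle (x t) : k x t ≤ φ x :=
    le_csSup (isCompact_univ.bddAbove_image (by fun_prop)) ⟨t, trivial, rfl⟩
  have hφ_le {x : K} {c : ℝ} (h : ∀ t, k x t ≤ c) : φ x ≤ c :=
    csSup_le ⟨_, 0, trivial, rfl⟩ (by rintro _ ⟨t, -, rfl⟩; exact h t)
  have hφ0 (x) : 0 ≤ φ x := by simpa [k, hr' (x, 0) (.inl rfl)] using hle x 0
  have hφ1 (x) : φ x ≤ 1 := hφ_le fun t => by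
    linarith [t.2.2, (r (x, t)).2.2.1, show k x t = t - (r (x, t)).2 from rfl]
  have hmem (x) (t : I) (hxt : φ x < t) : (r (x, t)).1 ∈ S := by
    refine (hr (x, t)).resolve_left fun h => ?_
    have := hle x t
    simp only [k, h, Set.Icc.coe_zero, sub_zero] at this
    linarith
  refine ⟨⟨fun p => (r p).1, by fun_prop⟩, ⟨fun x => ⟨φ x, hφ0 x, hφ1 x⟩, by fun_prop⟩,
    fun x => by simp [hr' (x, 0) (.inl rfl)], fun x hx t => by simp [hr' (x, t) (.inr hx)],
    fun x hx => Subtype.ext (le_antisymm (hφ_le fun t => ?_) (hφ0 _)), fun x t hxt hx1 => ?_⟩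
  · simp [k, hr' (x, t) (.inr hx)]
  · have hclosed : IsClosed {s : I | (r (x, s)).1 ∈ S} := hcl.preimage (by fun_prop)
    have hne : (Set.Ioi (⟨φ x, hφ0 x, hφ1 x⟩ : I)).Nonempty := ⟨1, hx1⟩
    have hsub : Set.Ioi (⟨φ x, hφ0 x, hφ1 x⟩ : I) ⊆ {s | (r (x, s)).1 ∈ S} := hmem x
    exact closure_minimal hsub hclosed ((closure_Ioi' hne).symm.subset hxt)

end HasHEP

/-- The union `S × Y ∪ X × T` inside `X × Y`, the source of the pushout product of the inclusions
of `S` and `T`. -/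
def wedgeSet (S : Set X) (T : Set Y) : Set (X × Y) := {p | p.1 ∈ S ∨ p.2 ∈ T}

theorem HasHEP.wedgeSet {S : Set X} {T : Set Y} (hS : HasHEP S) (hT : HasHEP T) :
    HasHEP (wedgeSet S T) := by
  obtain ⟨H, φ, h0, hHS, hφS, hm⟩ := hS.exists_deformation
  obtain ⟨H', φ', h0', hHT, hφT, hm'⟩ := hT.exists_deformation
  have : Continuous (Set.projIcc (0 : ℝ) 1 zero_le_one) := continuous_projIcc
  refine ⟨(hS.1.preimage continuous_fst).union (hT.1.preimage continuous_snd), ⟨fun z =>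
    ((H (z.1.1, min z.2 (φ' z.1.2)), H' (z.1.2, min z.2 (φ z.1.1))),
      Set.projIcc 0 1 zero_le_one ((z.2 : ℝ) - min (φ z.1.1 : ℝ) (φ' z.1.2))), by fun_prop⟩,
    ?_, ?_⟩
  · rintro ⟨⟨x, y⟩, t⟩
    rcases le_or_gt t (min (φ x) (φ' y)) with h | h
    · have h₁ : (t : ℝ) ≤ φ x := h.trans (min_le_left _ _)
      have h₂ : (t : ℝ) ≤ φ' y := h.trans (min_le_right _ _)
      exact .inl (Set.projIcc_of_le_left zero_le_one (by simpa using ⟨h₁, h₂⟩))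
    · rcases le_total (φ x) (φ' y) with hxy | hxy
      · rw [min_eq_left hxy] at h
        exact .inr (.inl (hm _ _ (le_min h.le hxy) (h.trans_le le_one')))
      · rw [min_eq_right hxy] at h
        exact .inr (.inr (hm' _ _ (le_min h.le hxy) (h.trans_le le_one')))
  · have hφ₀ (x) : (0 : ℝ) ≤ φ x := (φ x).2.1
    have hφ₀' (y) : (0 : ℝ) ≤ φ' y := (φ' y).2.1
    rintro ⟨⟨x, y⟩, t⟩ (rfl | hx | hy)
    · simp only [ContinuousMap.coe_mk, min_eq_left (nonneg' : (0 : I) ≤ _), h0, h0']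
      exact Prod.ext rfl (Set.projIcc_of_le_left zero_le_one (by simpa using ⟨hφ₀ x, hφ₀' y⟩))
    · simp [hφS x hx, hHS x hx, h0', min_eq_left (hφ₀' y)]
    · simp [hφT y hy, hHT y hy, h0, min_eq_right (hφ₀ x)]

/-- The retraction stretches `I` away from its midpoint as time passes; a point spends the time
left after it reaches an endpoint moving up. -/
theorem hasHEP_endpoints : HasHEP ({0, 1} : Set I) := by
  let clamp : ℝ → I := Set.projIcc 0 1 zero_le_one
  have hclamp : Continuous clamp := continuous_projIcc
  have hclamp_le {a : ℝ} : a ≤ 0 → clamp a = 0 := Set.projIcc_of_le_left zero_le_one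
  have hclamp_ge {a : ℝ} : 1 ≤ a → clamp a = 1 := Set.projIcc_of_right_le zero_le_one
  have hclamp_coe (a : I) : clamp a = a := Set.projIcc_val zero_le_one a
  refine ⟨(Set.toFinite _).isClosed, ⟨fun z => (clamp (z.1 + z.2 * (2 * z.1 - 1)),
    clamp (z.2 - 3 * min (z.1 : ℝ) (1 - z.1))), by fun_prop⟩, fun ⟨u, t⟩ => ?_, fun ⟨u, t⟩ h => ?_⟩
  · rcases le_or_gt (t : ℝ) (3 * min (u : ℝ) (1 - u)) with h | h
    · exact .inl (hclamp_le (sub_nonpos.2 h))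
    · rcases min_choice (u : ℝ) (1 - u) with hu | hu <;> rw [hu] at h
      · exact .inr (.inl (hclamp_le (by nlinarith [u.2.1, t.2.2])))
      · exact .inr (.inr (hclamp_ge (by nlinarith [u.2.2, t.2.2])))
  · rcases h with (rfl : t = 0) | (rfl : u = 0) | (rfl : u = 1)
    · have hmin : 0 ≤ min (u : ℝ) (1 - u) := le_min u.2.1 (sub_nonneg.2 u.2.2)
      exact Prod.ext (by simp [hclamp_coe]) (hclamp_le (by simpa using hmin))
    · exact Prod.ext (hclamp_le (by simp [t.2.1])) (by simp [hclamp_coe])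
    · exact Prod.ext (hclamp_ge (by norm_num [t.2.1])) (by simp [hclamp_coe])

/-- The homeomorphism `I × Iᵐ ≃ Iᵐ⁺¹` splitting off the first coordinate. -/
def cubeCons (m : ℕ) : (I × (Fin m → I)) ≃ₜ (Fin (m + 1) → I) where
  toEquiv := Fin.consEquiv fun _ => I
  continuous_toFun := by
    change Continuous fun p : I × (Fin m → I) => (Fin.cons p.1 p.2 : Fin (m + 1) → I)
    fun_prop
  continuous_invFun := by
    change Continuous fun v : Fin (m + 1) → I => (v 0, fun i : Fin m => v i.succ)
    fun_prop

/-- The boundary of the `(m + 1)`-cube regarded as the prism `I × I^m`. -/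
abbrev prismBoundary (m : ℕ) : Set (I × (Fin m → I)) :=
  wedgeSet {0, 1} (Cube.boundary (Fin m))

theorem cubeCons_preimage_boundary (m : ℕ) :
    cubeCons m ⁻¹' Cube.boundary (Fin (m + 1)) = prismBoundary m := by
  ext p
  exact Fin.exists_fin_succ

theorem hasHEP_boundary : ∀ n : ℕ, HasHEP (Cube.boundary (Fin n))
  | 0 => by
    have : Cube.boundary (Fin 0) = ∅ := Set.eq_empty_of_forall_notMem fun _ h => h.choose.elim0
    exact this ▸ .empty
  | m + 1 => by
    refine .of_homeomorph (cubeCons m) ?_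
    rw [cubeCons_preimage_boundary]
    exact hasHEP_endpoints.wedgeSet (hasHEP_boundary m)

end HomotopyExtension

section BoxFilling

variable {K Z : Type*} [TopologicalSpace K] [TopologicalSpace Z] {S : Set K}

theorem exists_glue_wedgeSet_endpoints (hS : IsClosed S) (l r : C(K × I, Z))
    (c : C((S × I) × I, Z)) (hcl : ∀ (x : S) v, c ((x, 0), v) = l (x, v))
    (hcr : ∀ (x : S) v, c ((x, 1), v) = r (x, v)) :
    ∃ a : C(wedgeSet S ({0, 1} : Set I) × I, Z), ∀ (w : wedgeSet S ({0, 1} : Set I)) (v : I),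
      (w.1.2 = 0 → a (w, v) = l (w.1.1, v)) ∧ (w.1.2 = 1 → a (w, v) = r (w.1.1, v)) ∧
      ∀ h : w.1.1 ∈ S, a (w, v) = c ((⟨w.1.1, h⟩, w.1.2), v) := by
  let Q : Set (wedgeSet S ({0, 1} : Set I) × I) := {p | p.1.1.2 = 1 ∨ p.1.1.1 ∈ S}
  have hQ₁ {X : Type _} [TopologicalSpace X] {u : X → I} (hu : Continuous u) (t : I) :
      IsClosed {p | u p = t} := isClosed_singleton.preimage hu
  obtain ⟨a₁, ha₁, ha₁'⟩ := exists_glue (P := {q : Q | q.1.1.1.2 = 1})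
    (Q := {q : Q | q.1.1.1.1 ∈ S}) (hQ₁ (by fun_prop) 1) (hS.preimage (by fun_prop)) (fun q => q.2)
    ⟨fun q => r (q.1.1.1.1.1, q.1.1.2), by fun_prop⟩
    ⟨fun q => c ((⟨q.1.1.1.1.1, q.2⟩, q.1.1.1.1.2), q.1.1.2), by fun_prop⟩
    (fun q (hq : q.1.1.1.2 = 1) hq' => by
      simp only [ContinuousMap.coe_mk, hq]
      exact (hcr ⟨_, hq'⟩ _).symm)
  obtain ⟨a, ha, ha'⟩ := exists_glue (P := {p : wedgeSet S ({0, 1} : Set I) × I | p.1.1.2 = 0})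
    (Q := Q) (hQ₁ (by fun_prop) 0) ((hQ₁ (by fun_prop) 1).union (hS.preimage (by fun_prop)))
    (fun p => by
      rcases p.1.2 with h | h | h
      exacts [.inr (.inr h), .inl h, .inr (.inl h)])
    ⟨fun p => l (p.1.1.1.1, p.1.2), by fun_prop⟩ a₁
    (fun p (hp : p.1.1.2 = 0) hp' => by
      have hpS : p.1.1.1 ∈ S := hp'.resolve_left fun h => zero_ne_one (hp.symm.trans h)
      rw [ha₁' ⟨p, hp'⟩ hpS]
      simp only [ContinuousMap.coe_mk, hp]
      exact (hcl ⟨_, hpS⟩ _).symm)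
  refine ⟨a, fun w v => ⟨fun h => ha (w, v) h, fun h => ?_, fun h => ?_⟩⟩
  · exact (ha' (w, v) (.inl h)).trans (ha₁ ⟨(w, v), .inl h⟩ h)
  · exact (ha' (w, v) (.inr h)).trans (ha₁' ⟨(w, v), .inr h⟩ h)

/-- A box `K × I × I` is filled from its bottom `b`, two sides `l` and `r`, and the part `c` over
`S`; the conclusion is the top of the filled box. -/
theorem HasHEP.exists_box_top (hS : HasHEP S) (b l r : C(K × I, Z)) (c : C((S × I) × I, Z))
    (hbl : ∀ x, l (x, 0) = b (x, 0)) (hbr : ∀ x, r (x, 0) = b (x, 1))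
    (hcb : ∀ (x : S) u, c ((x, u), 0) = b (x, u)) (hcl : ∀ (x : S) v, c ((x, 0), v) = l (x, v))
    (hcr : ∀ (x : S) v, c ((x, 1), v) = r (x, v)) :
    ∃ d : C(K × I, Z), (∀ x, d (x, 0) = l (x, 1)) ∧ (∀ x, d (x, 1) = r (x, 1)) ∧
      ∀ (x : S) u, d (x, u) = c ((x, u), 1) := by
  obtain ⟨a, ha⟩ := exists_glue_wedgeSet_endpoints hS.1 l r c hcl hcr
  obtain ⟨D, -, hD⟩ := (hS.wedgeSet hasHEP_endpoints).exists_homotopy_extension b a (by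
    rintro ⟨⟨x, u⟩, hw⟩
    rcases id hw with hx | (rfl : u = 0) | (rfl : u = 1)
    · exact ((ha _ 0).2.2 hx).trans (hcb ⟨x, hx⟩ u)
    · exact ((ha _ 0).1 rfl).trans (hbl x)
    · exact ((ha _ 0).2.1 rfl).trans (hbr x))
  refine ⟨D.comp ⟨fun p => (p, 1), by fun_prop⟩, fun x => ?_, fun x => ?_, fun x u => ?_⟩
  · exact (hD ⟨(x, 0), .inr (.inl rfl)⟩ 1).trans ((ha _ 1).1 rfl)
  · exact (hD ⟨(x, 1), .inr (.inr rfl)⟩ 1).trans ((ha _ 1).2.1 rfl)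
  · exact (hD ⟨(x, u), .inl x.2⟩ 1).trans ((ha _ 1).2.2 x.2)

/-- The map `x ↦ P (x, t)` at time `t` of a homotopy `P`. -/
def slice (P : C(K × I, Z)) (t : I) : C(K, Z) := ⟨fun x => P (x, t), by fun_prop⟩

@[simp] theorem slice_apply (P : C(K × I, Z)) (t : I) (x : K) : slice P t x = P (x, t) := rfl

theorem HasHEP.homotopicRel_slice_one (hS : HasHEP S) {P Q : C(K × I, Z)}
    (hPQ : ∀ x ∈ S, ∀ t, P (x, t) = Q (x, t)) (h : (slice P 0).HomotopicRel (slice Q 0) S) :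
    (slice P 1).HomotopicRel (slice Q 1) S := by
  rw [homotopicRel_iff] at h ⊢
  obtain ⟨F, hF0, hF1, hFS⟩ := h
  obtain ⟨d, hd0, hd1, hdS⟩ := hS.exists_box_top F P Q ⟨fun p => P (p.1.1, p.2), by fun_prop⟩
    (fun x => (hF0 x).symm) (fun x => (hF1 x).symm) (fun x u => (hFS x x.2 u).symm)
    (fun _ _ => rfl) (fun x v => hPQ x x.2 v)
  exact ⟨d, hd0, hd1, fun x hx t => hdS ⟨x, hx⟩ t⟩

end BoxFilling

section Lifting

variable {K K' Z Z' : Type*} [TopologicalSpace K] [TopologicalSpace K'] [TopologicalSpace Z]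
  [TopologicalSpace Z'] {S : Set K} {f : C(Z, Z')}

/-- The map of pairs from `(K, S)` to the mapping cylinder of `f` given by `α` and `β` compresses
into the source of `f`: `α` extends to a lift of `β` up to homotopy relative to `S`. -/
def Lifts (f : C(Z, Z')) (α : C(S, Z)) (β : C(K, Z')) : Prop :=
  ∃ γ : C(K, Z), (∀ x : S, γ x = α x) ∧ (f.comp γ).HomotopicRel β S

/-- Every map of pairs from `(K, S)` to `f` compresses into the source of `f`. -/
def LiftsRel (f : C(Z, Z')) (S : Set K) : Prop :=
  ∀ (α : C(S, Z)) (β : C(K, Z')), (∀ x : S, f (α x) = β x) → Lifts f α β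

theorem HasHEP.lifts_slice_one (hS : HasHEP S) {a : C(S × I, Z)} {b : C(K × I, Z')}
    (hab : ∀ (x : S) t, f (a (x, t)) = b (x, t)) (h : Lifts f (slice a 0) (slice b 0)) :
    Lifts f (slice a 1) (slice b 1) := by
  obtain ⟨γ, hγ, hh⟩ := h
  obtain ⟨G, hG0, hGS⟩ := hS.exists_homotopy_extension γ a fun x => (hγ x).symm
  refine ⟨slice G 1, fun x => hGS x 1, hS.homotopicRel_slice_one (P := f.comp G) (Q := b)
    (fun x hx t => ?_) ?_⟩
  · rw [ContinuousMap.comp_apply, hGS ⟨x, hx⟩ t, hab]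
  · convert hh using 1
    ext x
    exact congrArg f (hG0 x)

theorem HasHEP.lifts_slice_zero (hS : HasHEP S) {a : C(S × I, Z)} {b : C(K × I, Z')}
    (hab : ∀ (x : S) t, f (a (x, t)) = b (x, t)) (h : Lifts f (slice a 1) (slice b 1)) :
    Lifts f (slice a 0) (slice b 0) := by
  have := hS.lifts_slice_one (f := f) (a := a.comp ⟨fun p => (p.1, σ p.2), by fun_prop⟩)
    (b := b.comp ⟨fun p => (p.1, σ p.2), by fun_prop⟩) (fun x t => hab x _)
  simpa [slice, ContinuousMap.comp] using this (by simpa [slice, ContinuousMap.comp] using h)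

/-- The homotopy extension and lifting property: the homotopy from `f ∘ γ` to `β` may be prescribed
on `S`. -/
theorem LiftsRel.exists_lift_of_homotopy (hf : LiftsRel f S) (hS : HasHEP S) (α : C(S, Z))
    (β : C(K, Z')) (h : C(S × I, Z')) (h0 : ∀ x, h (x, 0) = f (α x)) (h1 : ∀ x, h (x, 1) = β x) :
    ∃ (γ : C(K, Z)) (H : C(K × I, Z')), (∀ x : S, γ x = α x) ∧ (∀ x, H (x, 0) = f (γ x)) ∧
      (∀ x, H (x, 1) = β x) ∧ ∀ (x : S) t, H (x, t) = h (x, t) := by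
  obtain ⟨b, hb1, hbS⟩ := hS.exists_homotopy_extension_one β h h1
  obtain ⟨γ, hγ, hh⟩ := hf α (slice b 0) fun x => by rw [slice_apply, hbS, h0]
  obtain ⟨F, hF0, hF1, hFS⟩ := homotopicRel_iff.1 hh.symm
  obtain ⟨H, hH0, hH1, hHS⟩ := hS.exists_box_top b F (β.comp .fst)
    ⟨fun p => h p.1, by fun_prop⟩ hF0 (fun x => (hb1 x).symm) (fun x u => (hbS x u).symm)
    (fun x v => by rw [hFS x x.2, slice_apply, hbS]; rfl) (fun x _ => h1 x)
  exact ⟨γ, H, hγ, fun x => (hH0 x).trans (hF1 x), hH1, hHS⟩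

theorem LiftsRel.of_homotopic (hS : HasHEP S) {f₀ f₁ : C(Z, Z')} (H : f₀.Homotopic f₁)
    (h : LiftsRel f₀ S) : LiftsRel f₁ S := by
  obtain ⟨H⟩ := H
  intro α β hαβ
  obtain ⟨b, hb1, hbS⟩ := hS.exists_homotopy_extension_one β
    ⟨fun p => H (p.2, α p.1), by fun_prop⟩ (fun x => by simp [hαβ])
  obtain ⟨γ, hγ, hh⟩ := h α (slice b 0) fun x => by simp [hbS]
  refine ⟨γ, hγ, ?_⟩
  have := hS.homotopicRel_slice_one (P := ⟨fun p => H (p.2, γ p.1), by fun_prop⟩) (Q := b)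
    (fun x hx t => by simp [hbS ⟨x, hx⟩ t, hγ ⟨x, hx⟩]) (by convert hh using 1; ext; simp)
  convert this using 1 <;> ext <;> simp [hb1]

theorem LiftsRel.of_homeomorph (e : K ≃ₜ K') {S' : Set K'} (h : LiftsRel f (e ⁻¹' S')) :
    LiftsRel f S' := by
  intro α β hαβ
  obtain ⟨γ, hγ, hh⟩ := h (α.comp ⟨fun x => ⟨e x, x.2⟩, by fun_prop⟩)
    (β.comp ⟨e, e.continuous⟩) (fun x => hαβ _)
  obtain ⟨F, h0, h1, hS⟩ := homotopicRel_iff.1 hh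
  refine ⟨γ.comp ⟨e.symm, e.symm.continuous⟩, fun x => ?_, homotopicRel_iff.2
    ⟨F.comp ⟨fun p => (e.symm p.1, p.2), by fun_prop⟩, fun x => ?_, fun x => ?_, fun x hx t => ?_⟩⟩
  · simpa using hγ ⟨e.symm x, by simp⟩
  · simpa using h0 (e.symm x)
  · simpa using h1 (e.symm x)
  · simpa using hS (e.symm x) (by simpa using hx) t

theorem LiftsRel.prodMap {Z₁ Z₁' : Type*} [TopologicalSpace Z₁] [TopologicalSpace Z₁']
    {g : C(Z₁, Z₁')} (hf : LiftsRel f S) (hg : LiftsRel g S) : LiftsRel (f.prodMap g) S := by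
  intro α β hαβ
  obtain ⟨γ₁, hγ₁, hh₁⟩ := hf (.comp .fst α) (.comp .fst β) fun x => congrArg Prod.fst (hαβ x)
  obtain ⟨γ₂, hγ₂, hh₂⟩ := hg (.comp .snd α) (.comp .snd β) fun x => congrArg Prod.snd (hαβ x)
  obtain ⟨F₁, hF₁, hF₁', hF₁S⟩ := homotopicRel_iff.1 hh₁
  obtain ⟨F₂, hF₂, hF₂', hF₂S⟩ := homotopicRel_iff.1 hh₂
  exact ⟨γ₁.prodMk γ₂, fun x => Prod.ext (hγ₁ x) (hγ₂ x), homotopicRel_iff.2 ⟨F₁.prodMk F₂,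
    fun x => Prod.ext (hF₁ x) (hF₂ x), fun x => Prod.ext (hF₁' x) (hF₂' x),
    fun x hx t => Prod.ext (hF₁S x hx t) (hF₂S x hx t)⟩⟩

end Lifting

section CubeLifts

variable {Z Z' : Type*} [TopologicalSpace Z] [TopologicalSpace Z'] {f : C(Z, Z')}

/-- `f` has the right lifting property up to homotopy against all inclusions of the boundary of a
cube. By `hasCubeLifts_iff` these are the weak homotopy equivalences. -/
def HasCubeLifts (f : C(Z, Z')) : Prop :=
  ∀ n, LiftsRel f (Cube.boundary (Fin n))

theorem HasCubeLifts.homotopicRel_of_comp (h : HasCubeLifts f) {m : ℕ} {p q : C(Fin m → I, Z)}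
    (hpq : ∀ y ∈ Cube.boundary (Fin m), p y = q y)
    (hH : (f.comp p).HomotopicRel (f.comp q) (Cube.boundary (Fin m))) :
    p.HomotopicRel q (Cube.boundary (Fin m)) := by
  obtain ⟨H, h0, h1, hS⟩ := homotopicRel_iff.1 hH
  have hprism : LiftsRel f (prismBoundary m) := by
    refine .of_homeomorph (cubeCons m).symm ?_
    rw [← cubeCons_preimage_boundary, ← Set.preimage_comp, Homeomorph.self_comp_symm]
    exact h (m + 1)
  obtain ⟨α, hα0, hα1⟩ := exists_glue (K := prismBoundary m)
    (P := {w | w.1.1 = 0 ∨ w.1.2 ∈ Cube.boundary (Fin m)}) (Q := {w | w.1.1 = 1})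
    (((isClosed_singleton (x := 0)).preimage (by fun_prop)).union
      ((hasHEP_boundary m).1.preimage (by fun_prop)))
    ((isClosed_singleton (x := 1)).preimage (by fun_prop))
    (fun w => by rcases w.2 with (h | h) | h; exacts [.inl (.inl h), .inr h, .inl (.inr h)])
    (p.comp ⟨fun w => w.1.1.2, by fun_prop⟩) (q.comp ⟨fun w => w.1.1.2, by fun_prop⟩)
    (fun w hw (hw' : w.1.1 = 1) =>
      hpq _ (hw.resolve_left fun hw => zero_ne_one (hw.symm.trans hw')))
  obtain ⟨γ, hγ, -⟩ := hprism α (H.comp ⟨Prod.swap, continuous_swap⟩) (by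
    rintro ⟨⟨t, y⟩, hw⟩
    rcases id hw with ((rfl : t = 0) | (rfl : t = 1)) | hy
    · rw [hα0 _ (.inl rfl)]
      exact (h0 y).symm
    · rw [hα1 _ rfl]
      exact (h1 y).symm
    · rw [hα0 _ (.inr hy)]
      exact (hS y hy t).symm)
  refine homotopicRel_iff.2 ⟨γ.comp ⟨Prod.swap, continuous_swap⟩, fun y => ?_, fun y => ?_,
    fun y hy t => ?_⟩
  · exact (hγ ⟨(0, y), .inl (.inl rfl)⟩).trans (hα0 _ (.inl rfl))
  · exact (hγ ⟨(1, y), .inl (.inr rfl)⟩).trans (hα1 _ rfl)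
  · exact (hγ ⟨(t, y), .inr hy⟩).trans (hα0 _ (.inr hy))

instance isEmpty_boundary_fin_zero : IsEmpty (Cube.boundary (Fin 0)) :=
  ⟨fun x => x.2.choose.elim0⟩

theorem HasCubeLifts.bijective_inducedZerothHomotopy (h : HasCubeLifts f) :
    Function.Bijective (inducedZerothHomotopy f) := by
  have hbd (y : Fin 0 → I) : y ∉ Cube.boundary (Fin 0) := fun hy => isEmptyElim (⟨y, hy⟩ :
    Cube.boundary (Fin 0))
  refine ⟨fun a b => Quotient.inductionOn₂' a b fun z z' hzz => ?_,
    fun b => Quotient.inductionOn' b fun z' => ?_⟩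
  · obtain ⟨c⟩ : Joined (f z) (f z') := Quotient.exact hzz
    obtain ⟨F, hF0, hF1, -⟩ := homotopicRel_iff.1 <|
      h.homotopicRel_of_comp (m := 0) (p := .const _ z) (q := .const _ z')
        (fun y hy => (hbd y hy).elim) (homotopicRel_iff.2 ⟨c.toContinuousMap.comp .snd,
          fun _ => c.source, fun _ => c.target, fun y hy => (hbd y hy).elim⟩)
    exact Quotient.sound ⟨⟨F.comp ⟨fun t => (0, t), by fun_prop⟩, hF0 0, hF1 0⟩⟩
  · obtain ⟨γ, -, hγ⟩ := h 0 ⟨isEmptyElim, continuous_of_const fun x => isEmptyElim x⟩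
      (.const _ z') isEmptyElim
    obtain ⟨F, hF0, hF1, -⟩ := homotopicRel_iff.1 hγ
    exact ⟨Quotient.mk (pathSetoid Z) (γ 0),
      Quotient.sound ⟨⟨F.comp ⟨fun t => (0, t), by fun_prop⟩, hF0 0, hF1 0⟩⟩⟩

theorem HasCubeLifts.bijective_inducedHomotopyGroup (h : HasCubeLifts f) (n : ℕ) (x : Z) :
    Function.Bijective (inducedHomotopyGroup (Fin n) f x) := by
  refine ⟨fun a b => Quotient.inductionOn₂' a b fun p q hpq => ?_,
    fun b => Quotient.inductionOn' b fun q => ?_⟩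
  · have hpq' : GenLoop.Homotopic (inducedGenLoop f p) (inducedGenLoop f q) := Quotient.exact hpq
    exact Quotient.sound (h.homotopicRel_of_comp (p := p.1) (q := q.1)
      (fun y hy => (p.2 y hy).trans (q.2 y hy).symm) hpq')
  · obtain ⟨γ, hγ, hh⟩ := h n (.const _ x) q.1 fun y => (q.2 y y.2).symm
    exact ⟨Quotient.mk' ⟨γ, fun y hy => hγ ⟨y, hy⟩⟩, Quotient.sound hh⟩

/-- The prism is first projected onto its face `{0} × Iᵐ`, which is then contracted. -/
theorem exists_prism_contraction (m : ℕ) :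
    ∃ κ : C((I × (Fin m → I)) × I, I × (Fin m → I)), (∀ p, κ (p, 0) = p) ∧ (∀ p, κ (p, 1) = 0) ∧
      ∀ p, p.1 = 0 ∨ p.2 ∈ Cube.boundary (Fin m) → ∀ t, κ (p, t) ∈ prismBoundary m := by
  let c (r : ℝ) (t : I) : I := Set.projIcc 0 1 zero_le_one (r - 2 * t)
  have hc (r) : Continuous (c r) := continuous_projIcc.comp (by fun_prop)
  have hc0 (r) (hr : 1 ≤ r) : c r 0 = 1 := Set.projIcc_of_right_le _ (by simpa)
  have hc1 (r) (hr : r ≤ 2) : c r 1 = 0 := Set.projIcc_of_le_left _ (by simpa)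
  refine ⟨⟨fun q => (q.1.1 * c 1 q.2, fun i => q.1.2 i * c 2 q.2), by fun_prop⟩,
    fun p => by simp [hc0], fun p => by simp [hc1]; rfl, fun p hp t => ?_⟩
  rcases le_total (t : ℝ) (1 / 2) with ht | ht
  · have h1 : c 2 t = 1 := Set.projIcc_of_right_le _ (by linarith)
    exact hp.imp (fun h => .inl (by simp [h])) (fun h => by simpa [h1] using h)
  · have h0 : c 1 t = 0 := Set.projIcc_of_le_left _ (by linarith)
    exact .inl (.inl (by simp [h0]))

theorem exists_homotopy_const {m : ℕ} (α : C(prismBoundary m, Z)) :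
    ∃ (a : C(prismBoundary m × I, Z)) (e : Z), (∀ w, a (w, 0) = α w) ∧
      ∀ w, w.1.1 = 0 ∨ w.1.2 ∈ Cube.boundary (Fin m) → a (w, 1) = e := by
  obtain ⟨κ, hκ0, hκ1, hκJ⟩ := exists_prism_contraction m
  obtain ⟨b, hb0, hb⟩ := (hasHEP_boundary m).exists_homotopy_extension
    (α.comp ⟨fun y => ⟨(1, y), .inl (.inr rfl)⟩, by fun_prop⟩)
    (α.comp ⟨fun q => ⟨κ ((1, q.1), q.2), hκJ _ (.inr q.1.2) _⟩, by fun_prop⟩)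
    (fun y => congrArg α (Subtype.ext (hκ0 _)))
  obtain ⟨a, haJ, haT⟩ := exists_glue (K := prismBoundary m × I)
    (P := {q | q.1.1.1 = 0 ∨ q.1.1.2 ∈ Cube.boundary (Fin m)}) (Q := {q | q.1.1.1 = 1})
    (((isClosed_singleton (x := 0)).preimage (by fun_prop)).union
      ((hasHEP_boundary m).1.preimage (by fun_prop)))
    ((isClosed_singleton (x := 1)).preimage (by fun_prop))
    (fun q => by rcases q.1.2 with (h | h) | h; exacts [.inl (.inl h), .inr h, .inl (.inr h)])
    (α.comp ⟨fun q => ⟨κ (q.1.1.1, q.1.2), hκJ _ q.2 _⟩, by fun_prop⟩)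
    (b.comp ⟨fun q => (q.1.1.1.2, q.1.2), by fun_prop⟩) (by
      rintro ⟨⟨⟨u, y⟩, hw⟩, t⟩ hJ (rfl : u = 1)
      exact (hb ⟨y, hJ.resolve_left one_ne_zero⟩ t).symm)
  refine ⟨a, α ⟨0, .inl (.inl rfl)⟩, fun w => ?_,
    fun w hw => (haJ (w, 1) hw).trans (congrArg α (Subtype.ext (hκ1 _)))⟩
  by_cases hw : w.1.1 = 1
  · exact (haT (w, 0) hw).trans ((hb0 _).trans (congrArg α (Subtype.ext (Prod.ext hw.symm rfl))))
  · refine (haJ (w, 0) ?_).trans (congrArg α (Subtype.ext (hκ0 _)))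
    exact w.2.imp (fun h => h.resolve_right hw) id

theorem exists_extension_of_injective {m : ℕ}
    (hf : ∀ z, Function.Injective (inducedHomotopyGroup (Fin m) f z))
    (α : C(prismBoundary m, Z)) (β : C(I × (Fin m → I), Z'))
    (h : ∀ w, f (α w) = β w) : ∃ γ : C(I × (Fin m → I), Z), ∀ w, γ w.1 = α w := by
  have hS := hasHEP_endpoints.wedgeSet (hasHEP_boundary m)
  obtain ⟨a, e, ha0, ha1⟩ := exists_homotopy_const α
  obtain ⟨b, -, hb⟩ := hS.exists_homotopy_extension β (f.comp a) (fun w => by simp [ha0, h])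
  let p : GenLoop (Fin m) Z e := ⟨a.comp ⟨fun y => (⟨(1, y), .inl (.inr rfl)⟩, 1), by fun_prop⟩,
    fun y hy => ha1 _ (.inr hy)⟩
  have hfp : GenLoop.Homotopic (inducedGenLoop f GenLoop.const) (inducedGenLoop f p) := by
    refine homotopicRel_iff.2 ⟨b.comp ⟨fun q => (q.swap, 1), by fun_prop⟩, fun y => ?_,
      fun y => hb ⟨(1, y), .inl (.inr rfl)⟩ 1, fun y hy t => ?_⟩
    · exact (hb ⟨(0, y), .inl (.inl rfl)⟩ 1).trans (congrArg f (ha1 _ (.inl rfl)))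
    · exact (hb ⟨(t, y), .inr hy⟩ 1).trans (congrArg f (ha1 _ (.inr hy)))
  have hp : GenLoop.Homotopic GenLoop.const p :=
    Quotient.exact (hf e (a₁ := Quotient.mk' GenLoop.const) (a₂ := Quotient.mk' p)
      (Quotient.sound hfp))
  obtain ⟨G, hG0, hG1, hGS⟩ := homotopicRel_iff.1 hp
  obtain ⟨γ, -, hγ⟩ := hS.exists_homotopy_extension_one (G.comp ⟨Prod.swap, continuous_swap⟩) a (by
    rintro ⟨⟨t, y⟩, hw⟩
    rcases id hw with ((rfl : t = 0) | (rfl : t = 1)) | hy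
    · exact (ha1 _ (.inl rfl)).trans (hG0 y).symm
    · exact (hG1 y).symm
    · exact (ha1 _ (.inr hy)).trans (hGS y hy t).symm)
  exact ⟨slice γ 0, fun w => (hγ w 0).trans (ha0 w)⟩

theorem lifts_restrict_of_surjective {n : ℕ}
    (hf : ∀ z, Function.Surjective (inducedHomotopyGroup (Fin n) f z)) (γ : C(Fin n → I, Z))
    (β : C(Fin n → I, Z')) (h : ∀ y : Cube.boundary (Fin n), f (γ y) = β y) :
    Lifts f (γ.restrict (Cube.boundary (Fin n))) β := by
  have hS := hasHEP_boundary n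
  let a : C(Cube.boundary (Fin n) × I, Z) :=
    γ.comp ⟨fun p i => σ p.2 * p.1.1 i, continuous_pi fun i =>
      .mul (by fun_prop) ((continuous_apply i).comp (by fun_prop))⟩
  have ha0 (y) : a (y, 0) = γ y := by simp [a]
  have ha1 (y) : a (y, 1) = γ 0 := by simp [a, Pi.zero_def]
  obtain ⟨b, hb0, hb⟩ := hS.exists_homotopy_extension β (f.comp a) fun y => by simp [ha0, h]
  let q : GenLoop (Fin n) Z' (f (γ 0)) :=
    ⟨slice b 1, fun y hy => (hb ⟨y, hy⟩ 1).trans (congrArg f (ha1 _))⟩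
  obtain ⟨p, hp⟩ := hf (γ 0) (Quotient.mk' q)
  induction p using Quotient.inductionOn' with | _ p
  have hpq : GenLoop.Homotopic (inducedGenLoop f p) q := Quotient.exact hp
  have := hS.lifts_slice_zero (a := a) (b := b) (fun y t => (hb y t).symm)
    ⟨p.1, fun y => (p.2 y y.2).trans (ha1 y).symm, hpq⟩
  convert this using 1
  · ext y; exact (ha0 y).symm
  · ext y; exact (hb0 y).symm

theorem IsWeakHomotopyEquiv.hasCubeLifts (hf : IsWeakHomotopyEquiv f) : HasCubeLifts f := by
  rintro (_ | m) α β h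
  · obtain ⟨z, hz⟩ := hf.1.2 (Quotient.mk (pathSetoid Z') (β 0))
    induction z using Quotient.inductionOn' with | _ z
    obtain ⟨c⟩ : Joined (f z) (β 0) := Quotient.exact hz
    exact ⟨.const _ z, isEmptyElim, homotopicRel_iff.2 ⟨c.toContinuousMap.comp .snd,
      fun _ => c.source, fun x => c.target.trans (congrArg β (Subsingleton.elim _ _)),
      fun x hx => isEmptyElim (⟨x, hx⟩ : Cube.boundary (Fin 0))⟩⟩
  · have hmem (w : prismBoundary m) :
        cubeCons m w ∈ Cube.boundary (Fin (m + 1)) := (cubeCons_preimage_boundary m).ge w.2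
    obtain ⟨γ, hγ⟩ := exists_extension_of_injective (fun z => (hf.2 m z).1)
      (α.comp ⟨fun w => ⟨cubeCons m w, hmem w⟩, by fun_prop⟩)
      (β.comp ⟨cubeCons m, (cubeCons m).continuous⟩) (fun w => h _)
    have hγα (x : Cube.boundary (Fin (m + 1))) : γ ((cubeCons m).symm x) = α x := by
      have hx : (cubeCons m).symm x ∈ prismBoundary m := by
        rw [← cubeCons_preimage_boundary, Set.mem_preimage, Homeomorph.apply_symm_apply]
        exact x.2
      simpa using hγ ⟨_, hx⟩
    have := lifts_restrict_of_surjective (fun z => (hf.2 (m + 1) z).2)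
      (γ.comp ⟨(cubeCons m).symm, (cubeCons m).symm.continuous⟩) β
      (fun x => (congrArg f (hγα x)).trans (h x))
    convert this using 1
    exact ContinuousMap.ext fun x => (hγα x).symm

theorem hasCubeLifts_iff : HasCubeLifts f ↔ IsWeakHomotopyEquiv f :=
  ⟨fun h => ⟨h.bijective_inducedZerothHomotopy, h.bijective_inducedHomotopyGroup⟩,
    fun h => h.hasCubeLifts⟩

end CubeLifts

section WeakHomotopyEquiv

variable {X Y Z W : Type*} [TopologicalSpace X] [TopologicalSpace Y] [TopologicalSpace Z]
  [TopologicalSpace W]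

theorem inducedZerothHomotopy_comp (g : C(Y, Z)) (f : C(X, Y)) :
    inducedZerothHomotopy (g.comp f) = inducedZerothHomotopy g ∘ inducedZerothHomotopy f :=
  funext fun a => Quotient.inductionOn' a fun _ => rfl

theorem inducedHomotopyGroup_comp (N : Type*) (g : C(Y, Z)) (f : C(X, Y)) (x : X) :
    inducedHomotopyGroup N (g.comp f) x =
      inducedHomotopyGroup N g (f x) ∘ inducedHomotopyGroup N f x :=
  funext fun a => Quotient.inductionOn' a fun _ => rfl

namespace IsWeakHomotopyEquiv

theorem id : IsWeakHomotopyEquiv (.id X) := by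
  have h0 : inducedZerothHomotopy (.id X) = _root_.id :=
    funext fun a => Quotient.inductionOn' a fun _ => rfl
  have hn (n : ℕ) (x : X) : inducedHomotopyGroup (Fin n) (.id X) x = _root_.id :=
    funext fun a => Quotient.inductionOn' a fun _ => rfl
  exact ⟨h0 ▸ Function.bijective_id, fun n x => hn n x ▸ Function.bijective_id⟩

theorem comp {g : C(Y, Z)} {f : C(X, Y)} (hg : IsWeakHomotopyEquiv g)
    (hf : IsWeakHomotopyEquiv f) : IsWeakHomotopyEquiv (g.comp f) :=
  ⟨inducedZerothHomotopy_comp g f ▸ hg.1.comp hf.1,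
    fun n x => inducedHomotopyGroup_comp (Fin n) g f x ▸ (hg.2 n (f x)).comp (hf.2 n x)⟩

theorem of_comp_of_comp {h : C(Z, W)} {g : C(Y, Z)} {f : C(X, Y)}
    (hgf : IsWeakHomotopyEquiv (g.comp f)) (hhg : IsWeakHomotopyEquiv (h.comp g)) :
    IsWeakHomotopyEquiv f := by
  have hset {A B C D : Type _} {u : A → B} {v : B → C} {w : C → D}
      (hvu : Function.Bijective (v ∘ u)) (hwv : Function.Bijective (w ∘ v)) :
      Function.Bijective u := ⟨hvu.1.of_comp, hvu.2.of_comp_left hwv.1.of_comp⟩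
  rw [IsWeakHomotopyEquiv, inducedZerothHomotopy_comp] at hgf hhg
  simp only [inducedHomotopyGroup_comp] at hgf hhg
  exact ⟨hset hgf.1 hhg.1, fun n x => hset (hgf.2 n x) (hhg.2 n (f x))⟩

theorem of_homotopic {f₀ f₁ : C(X, Y)} (h : IsWeakHomotopyEquiv f₀) (H : f₀.Homotopic f₁) :
    IsWeakHomotopyEquiv f₁ :=
  hasCubeLifts_iff.1 fun n => (h.hasCubeLifts n).of_homotopic (hasHEP_boundary n) H

theorem of_homotopyEquiv (e : ContinuousMap.HomotopyEquiv X Y) :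
    IsWeakHomotopyEquiv e.toFun :=
  of_comp_of_comp (id.of_homotopic e.left_inv.symm) (id.of_homotopic e.right_inv.symm)

theorem of_square (e : ContinuousMap.HomotopyEquiv X Y) (e' : ContinuousMap.HomotopyEquiv Z W)
    {g : C(X, Z)} {f : C(Y, W)} (hg : IsWeakHomotopyEquiv g)
    (h : f.comp e.toFun = e'.toFun.comp g) : IsWeakHomotopyEquiv f := by
  have hs : IsWeakHomotopyEquiv ((e'.toFun.comp g).comp e.invFun) :=
    ((of_homotopyEquiv e').comp hg).comp (of_homotopyEquiv e.symm)
  rw [← h, ContinuousMap.comp_assoc] at hs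
  exact hs.of_homotopic (.comp (.refl f) e.right_inv)

theorem prodMap {f : C(X, Y)} {g : C(Z, W)} (hf : IsWeakHomotopyEquiv f)
    (hg : IsWeakHomotopyEquiv g) : IsWeakHomotopyEquiv (f.prodMap g) :=
  hasCubeLifts_iff.1 fun n => (hf.hasCubeLifts n).prodMap (hg.hasCubeLifts n)

end IsWeakHomotopyEquiv

end WeakHomotopyEquiv

section Grid

variable {n : ℕ} (M : ℕ) {x y : Fin n → I}

/-- The smallest cell of the grid of mesh `1 / M` on the cube that contains `x`. -/
def gridCell (x : Fin n → I) : Set (Fin n → I) :=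
  {y | ∀ i, ⌊M * (x i : ℝ)⌋ ≤ M * (y i : ℝ) ∧ M * (y i : ℝ) ≤ ⌈M * (x i : ℝ)⌉}

/-- The coordinate directions in which the cell of the grid containing `x` extends. -/
noncomputable def gridDirections (x : Fin n → I) : Finset (Fin n) :=
  {i | ⌊M * (x i : ℝ)⌋ < ⌈M * (x i : ℝ)⌉}

/-- The boundary of `gridCell M x`, as a subset of this cell: the union of its proper faces. -/
def gridBoundary (x : Fin n → I) : Set (gridCell M x) :=
  {y | gridCell M y.1 ≠ gridCell M x}

variable {M}

theorem mem_gridDirections {i : Fin n} :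
    i ∈ gridDirections M x ↔ ⌊M * (x i : ℝ)⌋ < ⌈M * (x i : ℝ)⌉ := by
  simp [gridDirections]

theorem self_mem_gridCell : x ∈ gridCell M x := fun _ => ⟨Int.floor_le _, Int.le_ceil _⟩

theorem isClosed_gridCell : IsClosed (gridCell M x) := by
  simp only [gridCell, Set.ofPred_forall, Set.ofPred_and]
  exact isClosed_iInter fun i =>
    (isClosed_le (by fun_prop) (by fun_prop)).inter (isClosed_le (by fun_prop) (by fun_prop))

theorem gridCell_subset (h : y ∈ gridCell M x) : gridCell M y ⊆ gridCell M x := fun _ hz i =>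
  ⟨(Int.cast_le.2 (Int.le_floor.2 (h i).1)).trans (hz i).1,
    (hz i).2.trans (Int.cast_le.2 (Int.ceil_le.2 (h i).2))⟩

theorem gridDirections_subset (h : y ∈ gridCell M x) : gridDirections M y ⊆ gridDirections M x :=
  fun i hi => mem_gridDirections.2 <|
    (Int.le_floor.2 (h i).1).trans_lt ((mem_gridDirections.1 hi).trans_le (Int.ceil_le.2 (h i).2))

theorem gridCell_eq (h : y ∈ gridCell M x) (hd : gridDirections M y = gridDirections M x) :
    gridCell M y = gridCell M x := by
  have hfc (i) : ⌊M * (y i : ℝ)⌋ = ⌊M * (x i : ℝ)⌋ ∧ ⌈M * (y i : ℝ)⌉ = ⌈M * (x i : ℝ)⌉ := by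
    have h1 := Int.le_floor.2 (h i).1
    have h2 := Int.ceil_le.2 (h i).2
    have h3 := Int.ceil_le_floor_add_one (M * (x i : ℝ))
    have h4 := Int.floor_le_ceil (M * (y i : ℝ))
    have h5 : i ∈ gridDirections M y ↔ i ∈ gridDirections M x := by rw [hd]
    rw [mem_gridDirections, mem_gridDirections] at h5
    lia
  simp only [gridCell, hfc]

theorem card_gridDirections_lt (h : y ∈ gridCell M x) (hne : gridCell M y ≠ gridCell M x) :
    (gridDirections M y).card < (gridDirections M x).card :=
  Finset.card_lt_card ((gridDirections_subset h).ssubset_of_ne fun hd => hne (gridCell_eq h hd))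

theorem finite_range_gridCell : (Set.range (gridCell M : (Fin n → I) → _)).Finite := by
  let box (c : (Fin n → ℤ) × (Fin n → ℤ)) : Set (Fin n → I) :=
    {y | ∀ i, (c.1 i : ℝ) ≤ M * (y i : ℝ) ∧ M * (y i : ℝ) ≤ c.2 i}
  have hfin : (Set.Icc (0 : Fin n → ℤ) fun _ => M).Finite := Set.finite_Icc _ _
  refine ((hfin.prod hfin).image box).subset ?_
  rintro _ ⟨x, rfl⟩
  have h0 (i) : 0 ≤ M * (x i : ℝ) := mul_nonneg M.cast_nonneg (x i).2.1
  have h1 (i) : M * (x i : ℝ) ≤ (M : ℤ) := mul_le_of_le_one_right M.cast_nonneg (x i).2.2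
  have h2 (i) : ⌈M * (x i : ℝ)⌉ ≤ M := Int.ceil_le.2 (h1 i)
  exact ⟨(fun i => ⌊M * (x i : ℝ)⌋, fun i => ⌈M * (x i : ℝ)⌉),
    ⟨⟨fun i => Int.floor_nonneg.2 (h0 i), fun i => (Int.floor_le_ceil _).trans (h2 i)⟩,
      fun i => Int.ceil_nonneg (h0 i), h2⟩, rfl⟩

theorem continuousOn_of_gridCell {T : Type*} [TopologicalSpace T] {s : (Fin n → I) → T}
    {A : Set (Fin n → I)} (hA : ∀ x ∈ A, gridCell M x ⊆ A)
    (hs : ∀ x ∈ A, ContinuousOn s (gridCell M x)) : ContinuousOn s A := by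
  have hfin : Finite (gridCell M '' A) :=
    (finite_range_gridCell.subset (Set.image_subset_range _ _)).to_subtype
  have hU : ⋃ C : gridCell M '' A, C.1 = A := by
    ext y
    simp only [Set.mem_iUnion]
    constructor
    · rintro ⟨⟨_, x, hx, rfl⟩, hy⟩
      exact hA x hx hy
    · exact fun hy => ⟨⟨_, y, hy, rfl⟩, self_mem_gridCell⟩
  rw [← hU]
  refine (locallyFinite_of_finite _).continuousOn_iUnion ?_ ?_
  · rintro ⟨_, x, hx, rfl⟩
    exact isClosed_gridCell
  · rintro ⟨_, x, hx, rfl⟩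
    exact hs x hx

theorem gridCell_subset_boundary (hx : x ∈ Cube.boundary (Fin n)) (hM : 0 < M) :
    gridCell M x ⊆ Cube.boundary (Fin n) := by
  have hM' : (0 : ℝ) < M := Nat.cast_pos.2 hM
  intro y hy
  refine hx.imp fun i hi => hi.imp (fun h => ?_) fun h => ?_
  · have := (hy i).2
    rw [h, Set.Icc.coe_zero, mul_zero, Int.ceil_zero, Int.cast_zero] at this
    exact le_antisymm (Subtype.coe_le_coe.1 (nonpos_of_mul_nonpos_right this hM')) (y i).2.1
  · have := (hy i).1
    rw [h, Set.Icc.coe_one, mul_one, Int.floor_natCast, Int.cast_natCast] at this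
    exact le_antisymm (y i).2.2 (Subtype.coe_le_coe.1 ((le_mul_iff_one_le_right hM').1 this))

theorem gridCell_subset_ball {δ : ℝ} (hδ : 1 < M * δ) : gridCell M x ⊆ Metric.ball x δ := by
  have hδ0 : 0 < δ := pos_of_mul_pos_right (zero_lt_one.trans hδ) M.cast_nonneg
  refine fun y hy => (dist_pi_lt_iff hδ0).2 fun i => ?_
  obtain ⟨h1, h2⟩ := hy i
  have h3 : (⌈M * (x i : ℝ)⌉ : ℝ) ≤ ⌊M * (x i : ℝ)⌋ + 1 := by
    exact_mod_cast Int.ceil_le_floor_add_one (M * (x i : ℝ))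
  have h4 : |M * ((y i : ℝ) - x i)| ≤ 1 := by
    rw [abs_le, mul_sub]
    constructor <;> linarith [Int.floor_le (M * (x i : ℝ)), Int.le_ceil (M * (x i : ℝ))]
  rw [abs_mul, abs_of_nonneg M.cast_nonneg] at h4
  exact lt_of_mul_lt_mul_left (h4.trans_lt hδ) M.cast_nonneg

theorem ceil_eq_of_mem_gridDirections {i : Fin n} (hi : i ∈ gridDirections M x) :
    ⌈M * (x i : ℝ)⌉ = ⌊M * (x i : ℝ)⌋ + 1 := by
  have := mem_gridDirections.1 hi
  have := Int.ceil_le_floor_add_one (M * (x i : ℝ))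
  lia

theorem eq_of_notMem_gridDirections (hM : 0 < M) (hy : y ∈ gridCell M x) {i : Fin n}
    (hi : i ∉ gridDirections M x) : y i = x i := by
  have h : (⌈M * (x i : ℝ)⌉ : ℝ) ≤ ⌊M * (x i : ℝ)⌋ :=
    Int.cast_le.2 (not_lt.1 (mem_gridDirections.not.1 hi))
  refine Subtype.ext (mul_left_cancel₀ (Nat.cast_ne_zero.2 hM.ne' : (M : ℝ) ≠ 0) ?_)
  linarith [hy i, Int.floor_le (M * (x i : ℝ)), Int.le_ceil (M * (x i : ℝ))]

theorem mem_gridBoundary {y : gridCell M x} :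
    y ∈ gridBoundary M x ↔ ∃ i ∈ gridDirections M x,
      M * (y.1 i : ℝ) = ⌊M * (x i : ℝ)⌋ ∨ M * (y.1 i : ℝ) = ⌊M * (x i : ℝ)⌋ + 1 := by
  have h : y ∈ gridBoundary M x ↔ ∃ i ∈ gridDirections M x, i ∉ gridDirections M y.1 :=
    ⟨fun h => Finset.exists_of_ssubset
        ((gridDirections_subset y.2).ssubset_of_ne (mt (gridCell_eq y.2) h)),
      fun ⟨_, hi, hi'⟩ h => hi' (gridDirections_subset (h.ge self_mem_gridCell) hi)⟩
  rw [h]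
  refine exists_congr fun i => and_congr_right fun hi => ?_
  rw [mem_gridDirections, not_lt]
  constructor
  · intro hle
    have h1 := Int.le_floor.2 (y.2 i).1
    have h2 := Int.ceil_le.2 (y.2 i).2
    rw [ceil_eq_of_mem_gridDirections hi] at h2
    have h3 : M * (y.1 i : ℝ) = ⌊M * (y.1 i : ℝ)⌋ :=
      le_antisymm ((Int.le_ceil _).trans (Int.cast_le.2 hle)) (Int.floor_le _)
    rw [h3]
    have h4 : ⌊M * (y.1 i : ℝ)⌋ = ⌊M * (x i : ℝ)⌋ ∨ ⌊M * (y.1 i : ℝ)⌋ = ⌊M * (x i : ℝ)⌋ + 1 := by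
      have := Int.floor_le_ceil (M * (y.1 i : ℝ))
      lia
    exact_mod_cast h4
  · rintro (h | h)
    · rw [h, Int.ceil_intCast, Int.floor_intCast]
    · rw [h, ← Int.cast_one, ← Int.cast_add, Int.ceil_intCast, Int.floor_intCast]

theorem exists_gridCell_homeomorph (hM : 0 < M) (x : Fin n → I) :
    ∃ (k : ℕ) (ε : gridDirections M x ≃ Fin k) (e : (Fin k → I) ≃ₜ gridCell M x),
      ∀ z i, M * ((e z).1 i.1 : ℝ) = ⌊M * (x i.1 : ℝ)⌋ + z (ε i) := by
  have hM' : (0 : ℝ) < M := Nat.cast_pos.2 hM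
  let ε := (gridDirections M x).equivFin
  have hceil {i} (hi : i ∈ gridDirections M x) :
      (⌈M * (x i : ℝ)⌉ : ℝ) = ⌊M * (x i : ℝ)⌋ + 1 := by
    exact_mod_cast ceil_eq_of_mem_gridDirections hi
  have hx (i) : (0 : ℝ) ≤ ⌊M * (x i : ℝ)⌋ ∧ (⌈M * (x i : ℝ)⌉ : ℝ) ≤ M :=
    ⟨by exact_mod_cast Int.floor_nonneg.2 (mul_nonneg M.cast_nonneg (x i).2.1),
      by exact_mod_cast Int.ceil_le.2 (mul_le_of_le_one_right M.cast_nonneg (x i).2.2)⟩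
  let u (z : Fin _ → I) (i : Fin n) : I := if h : i ∈ gridDirections M x then
      ⟨(⌊M * (x i : ℝ)⌋ + z (ε ⟨i, h⟩)) / M, div_nonneg (add_nonneg (hx i).1 (z _).2.1) hM'.le,
        (div_le_one hM').2 (by linarith [(hx i).2, hceil h, (z (ε ⟨i, h⟩)).2.2])⟩
    else x i
  have hu (z i) (h : i ∈ gridDirections M x) :
      M * (u z i : ℝ) = ⌊M * (x i : ℝ)⌋ + z (ε ⟨i, h⟩) := by
    simp only [u, dif_pos h]
    field_simp
  have hu' (z i) (h : i ∉ gridDirections M x) : u z i = x i := dif_neg h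
  have hmem (z) : u z ∈ gridCell M x := fun i => by
    by_cases h : i ∈ gridDirections M x
    · rw [hu z i h, hceil h]
      exact ⟨by linarith [(z (ε ⟨i, h⟩)).2.1], by linarith [(z (ε ⟨i, h⟩)).2.2]⟩
    · rw [hu' z i h]
      exact self_mem_gridCell i
  have huc : Continuous u := continuous_pi fun i => by
    by_cases h : i ∈ gridDirections M x <;> simp only [u, h, dite_true, dite_false] <;> fun_prop
  let v (y : gridCell M x) (j : Fin _) : I :=
    ⟨M * (y.1 (ε.symm j) : ℝ) - ⌊M * (x (ε.symm j) : ℝ)⌋, sub_nonneg.2 (y.2 _).1,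
      by linarith [(y.2 (ε.symm j)).2, hceil (ε.symm j).2]⟩
  have hvu (z) : v ⟨u z, hmem z⟩ = z := funext fun j => Subtype.ext <| by
    simp only [v, hu z _ (ε.symm j).2, Subtype.coe_eta, Equiv.apply_symm_apply, add_sub_cancel_left]
  have huv (y) : u (v y) = y.1 := funext fun i => by
    by_cases h : i ∈ gridDirections M x
    · refine Subtype.ext (mul_left_cancel₀ hM'.ne' ?_)
      simp only [hu _ i h, v, Equiv.symm_apply_apply, add_sub_cancel]
    · exact (hu' _ i h).trans (eq_of_notMem_gridDirections hM y.2 h).symm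
  exact ⟨_, ε, Continuous.homeoOfEquivCompactToT2 (f := ⟨fun z => ⟨u z, hmem z⟩, v, hvu,
    fun y => Subtype.ext (huv y)⟩) (huc.subtype_mk hmem), fun z i => hu z i i.2⟩

theorem exists_cube_homeomorph_gridCell (hM : 0 < M) (x : Fin n → I) :
    ∃ (k : ℕ) (e : (Fin k → I) ≃ₜ gridCell M x),
      e ⁻¹' gridBoundary M x = Cube.boundary (Fin k) := by
  obtain ⟨k, ε, e, he⟩ := exists_gridCell_homeomorph hM x
  refine ⟨k, e, Set.ext fun z => mem_gridBoundary.trans ⟨?_, ?_⟩⟩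
  · rintro ⟨i, hi, h⟩
    refine ⟨ε ⟨i, hi⟩, ?_⟩
    simpa only [he z ⟨i, hi⟩, add_eq_left, add_right_inj, Set.Icc.coe_eq_zero,
      Set.Icc.coe_eq_one] using h
  · rintro ⟨j, h⟩
    refine ⟨ε.symm j, (ε.symm j).2, ?_⟩
    simpa only [he z (ε.symm j), Equiv.apply_symm_apply, add_eq_left, add_right_inj,
      Set.Icc.coe_eq_zero, Set.Icc.coe_eq_one] using h

end Grid

section OpenCover

variable {K Z Z' : Type*} [TopologicalSpace K] [TopologicalSpace Z] [TopologicalSpace Z']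
  {f : C(Z, Z')} {β : C(K, Z')} {R R' : Set Z'} {A : Set K} {s s' : K → Z × C(I, Z')}

/-- On `A`, the section `s` consists of a lift of `β` through `f` up to homotopy together with the
tracks of the homotopy, which remain in the region `R`. -/
structure IsControlledLift (f : C(Z, Z')) (β : C(K, Z')) (R : Set Z') (A : Set K)
    (s : K → Z × C(I, Z')) : Prop where
  continuousOn : ContinuousOn s A
  zero : ∀ y ∈ A, (s y).2 0 = f (s y).1
  one : ∀ y ∈ A, (s y).2 1 = β y
  mem : ∀ y ∈ A, ∀ t, (s y).2 t ∈ R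

namespace IsControlledLift

theorem mono (h : IsControlledLift f β R A s) (hR : R ⊆ R') : IsControlledLift f β R' A s :=
  ⟨h.continuousOn, h.zero, h.one, fun y hy t => hR (h.mem y hy t)⟩

theorem congr (h : IsControlledLift f β R A s) (hs : Set.EqOn s' s A) :
    IsControlledLift f β R A s' where
  continuousOn := h.continuousOn.congr hs
  zero y hy := by rw [hs hy, h.zero y hy]
  one y hy := by rw [hs hy, h.one y hy]
  mem y hy := by rw [hs hy]; exact h.mem y hy

theorem of_continuousMap (γ : C(A, Z)) (H : C(A × I, Z')) (hs : ∀ y : A, s y = (γ y, H.curry y))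
    (h0 : ∀ y, H (y, 0) = f (γ y)) (h1 : ∀ y, H (y, 1) = β y) (hR : ∀ p, H p ∈ R) :
    IsControlledLift f β R A s where
  continuousOn := continuousOn_iff_continuous_domRestrict.2 <|
    Continuous.congr (by fun_prop) fun y => (hs y).symm
  zero y hy := by rw [hs ⟨y, hy⟩]; exact h0 ⟨y, hy⟩
  one y hy := by rw [hs ⟨y, hy⟩]; exact h1 ⟨y, hy⟩
  mem y hy t := by rw [hs ⟨y, hy⟩]; exact hR (⟨y, hy⟩, t)

theorem exists_extension {S : Set A} (hS : HasHEP S) (hf : LiftsRel (f.restrictPreimage R) S)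
    (hβ : A ⊆ β ⁻¹' R) (hs : IsControlledLift f β R (Subtype.val '' S) s) :
    ∃ s', IsControlledLift f β R A s' ∧ Set.EqOn s' s (Subtype.val '' S) := by
  have hS' (x : S) : (x : K) ∈ Subtype.val '' S := Set.mem_image_of_mem _ x.2
  have hsc : Continuous fun x : S => s x := hs.continuousOn.comp_continuous (by fun_prop) hS'
  have hc : Continuous fun p : S × I => (s p.1).2 p.2 :=
    (hsc.snd.comp continuous_fst).eval continuous_snd
  have hmem (x : S) : (s x).1 ∈ f ⁻¹' R := by
    rw [Set.mem_preimage, ← hs.zero _ (hS' x)]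
    exact hs.mem _ (hS' x) 0
  obtain ⟨γ, H, hγ, hH0, hH1, hHS⟩ := hf.exists_lift_of_homotopy hS
    ⟨fun x => ⟨(s x).1, hmem x⟩, hsc.fst.subtype_mk _⟩ ⟨fun y => ⟨β y, hβ y.2⟩, by fun_prop⟩
    ⟨fun p => ⟨(s p.1).2 p.2, hs.mem _ (hS' p.1) p.2⟩, hc.subtype_mk _⟩
    (fun x => Subtype.ext (hs.zero _ (hS' x))) (fun x => Subtype.ext (hs.one _ (hS' x)))
  let γ' : C(A, Z) := ⟨fun y => γ y, by fun_prop⟩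
  let H' : C(A × I, Z') := ⟨fun p => H p, by fun_prop⟩
  let s' : K → Z × C(I, Z') := Function.extend Subtype.val (fun y => (γ' y, H'.curry y)) s
  have hs' (y : A) : s' y = (γ' y, H'.curry y) := Subtype.val_injective.extend_apply _ _ y
  refine ⟨s', .of_continuousMap γ' H' hs' (fun y => congrArg Subtype.val (hH0 y))
    (fun y => congrArg Subtype.val (hH1 y)) fun p => (H p).2, ?_⟩
  rintro _ ⟨y, hy, rfl⟩
  rw [hs' y]
  exact Prod.ext (congrArg Subtype.val (hγ ⟨y, hy⟩))
    (ContinuousMap.ext fun t => congrArg Subtype.val (hHS ⟨y, hy⟩ t))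

end IsControlledLift

section Grid

variable {n M : ℕ} {β : C(Fin n → I, Z')} {A : Set (Fin n → I)} {s : (Fin n → I) → Z × C(I, Z')}

theorem IsControlledLift.of_gridCell (hA : ∀ x ∈ A, gridCell M x ⊆ A)
    (h : ∀ x ∈ A, IsControlledLift f β R (gridCell M x) s) : IsControlledLift f β R A s where
  continuousOn := continuousOn_of_gridCell hA fun x hx => (h x hx).continuousOn
  zero x hx := (h x hx).zero x self_mem_gridCell
  one x hx := (h x hx).one x self_mem_gridCell
  mem x hx := (h x hx).mem x self_mem_gridCell

variable {R : Set (Fin n → I) → Set Z'}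

theorem exists_controlledLift_gridCell (hM : 0 < M) (hR : Monotone R) {x : Fin n → I}
    (hβ : gridCell M x ⊆ β ⁻¹' R (gridCell M x))
    (hf : HasCubeLifts (f.restrictPreimage (R (gridCell M x))))
    (hs : ∀ y ∈ gridCell M x, gridCell M y ≠ gridCell M x →
      IsControlledLift f β (R (gridCell M y)) (gridCell M y) s) :
    ∃ s', IsControlledLift f β (R (gridCell M x)) (gridCell M x) s' ∧
      ∀ y ∈ gridCell M x, gridCell M y ≠ gridCell M x → s' y = s y := by
  obtain ⟨k, e, he⟩ := exists_cube_homeomorph_gridCell hM x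
  have hs' : IsControlledLift f β (R (gridCell M x)) (Subtype.val '' gridBoundary M x) s := by
    refine .of_gridCell (M := M) ?_ ?_
    · rintro _ ⟨y, hy, rfl⟩ z hz
      refine ⟨⟨z, gridCell_subset y.2 hz⟩, fun h => hy ?_, rfl⟩
      exact (gridCell_subset y.2).antisymm (h.ge.trans (gridCell_subset hz))
    · rintro _ ⟨y, hy, rfl⟩
      exact (hs y y.2 hy).mono (hR (gridCell_subset y.2))
  obtain ⟨s', h, h'⟩ := IsControlledLift.exists_extension
    (.of_homeomorph e (he ▸ hasHEP_boundary k)) (.of_homeomorph e (he ▸ hf k)) hβ hs'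
  exact ⟨s', h, fun y hy hne => h' ⟨⟨y, hy⟩, hne, rfl⟩⟩

/-- The skeleton-by-skeleton construction: `k` bounds the dimensions of the cells already lifted. -/
theorem exists_controlledLift_skeleton (hM : 0 < M) (hR : Monotone R)
    (hβ : ∀ x, gridCell M x ⊆ β ⁻¹' R (gridCell M x))
    (hf : ∀ x, HasCubeLifts (f.restrictPreimage (R (gridCell M x))))
    (hs : ∀ x ∈ Cube.boundary (Fin n), IsControlledLift f β (R (gridCell M x)) (gridCell M x) s)
    (k : ℕ) : ∃ s', Set.EqOn s' s (Cube.boundary (Fin n)) ∧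
      ∀ x, x ∈ Cube.boundary (Fin n) ∨ (gridDirections M x).card < k →
        IsControlledLift f β (R (gridCell M x)) (gridCell M x) s' := by
  classical
  induction k with
  | zero => exact ⟨s, fun _ _ => rfl, fun x hx => hs x (hx.resolve_right (Nat.not_lt_zero _))⟩
  | succ k ih =>
    obtain ⟨s₁, hs₁, h₁⟩ := ih
    let old : Set (Fin n → I) := {x | x ∈ Cube.boundary (Fin n) ∨ (gridDirections M x).card < k}
    have hold {x y} (hx : x ∈ old) (hy : y ∈ gridCell M x) : y ∈ old :=
      hx.imp (fun h => gridCell_subset_boundary h hM hy)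
        (Finset.card_le_card (gridDirections_subset hy)).trans_lt
    have hT (C : Set (Fin n → I)) : ∃ T, ∀ x, gridCell M x = C → (gridDirections M x).card = k →
        IsControlledLift f β (R C) C T ∧ ∀ y ∈ C, gridCell M y ≠ C → T y = s₁ y := by
      by_cases hC : ∃ x, gridCell M x = C ∧ (gridDirections M x).card = k
      · obtain ⟨x, rfl, hx⟩ := hC
        obtain ⟨T, hT⟩ := exists_controlledLift_gridCell hM hR (hβ x) (hf x) fun y hy hne =>
          h₁ y (.inr (hx ▸ card_gridDirections_lt hy hne))
        exact ⟨T, fun _ _ _ => hT⟩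
      · exact ⟨s₁, fun x hx hk => (hC ⟨x, hx, hk⟩).elim⟩
    choose T hT using hT
    refine ⟨old.piecewise s₁ fun y => T (gridCell M y) y,
      fun y hy => (old.piecewise_eq_of_mem _ _ (.inl hy)).trans (hs₁ hy), fun x hx => ?_⟩
    by_cases hxo : x ∈ old
    · exact (h₁ x hxo).congr fun y hy => old.piecewise_eq_of_mem _ _ (hold hxo hy)
    · have hk : (gridDirections M x).card = k := by
        rw [Set.mem_ofPred_eq] at hxo
        lia
      obtain ⟨hTx, hTs⟩ := hT _ x rfl hk
      refine hTx.congr fun y hy => ?_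
      by_cases hne : gridCell M y = gridCell M x
      · rw [old.piecewise_eq_of_notMem _ _ fun hyo => hxo (hold hyo (hne.ge self_mem_gridCell)),
          hne]
      · rw [hTs y hy hne]
        exact old.piecewise_eq_of_mem _ _ (.inr (hk ▸ card_gridDirections_lt hy hne))

end Grid

theorem HasCubeLifts.nonempty [Nonempty Z'] (hf : HasCubeLifts f) : Nonempty Z := by
  obtain ⟨γ, -⟩ := hf 0 ⟨isEmptyElim, by fun_prop⟩
    (.const _ (Classical.arbitrary Z')) isEmptyElim
  exact ⟨γ isEmptyElim⟩

theorem IsControlledLift.lifts {S : Set K} {α : C(S, Z)} (hs : IsControlledLift f β R .univ s)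
    (hα : ∀ y : S, s y = (α y, .const I (β y))) : Lifts f α β := by
  have hsc : Continuous s := continuousOn_univ.1 hs.continuousOn
  have hc : Continuous fun p : K × I => (s p.1).2 p.2 :=
    (hsc.snd.comp continuous_fst).eval continuous_snd
  refine ⟨⟨fun y => (s y).1, hsc.fst⟩, fun y => congrArg Prod.fst (hα y), homotopicRel_iff.2
    ⟨⟨_, hc⟩, fun y => hs.zero y trivial, fun y => hs.one y trivial, fun y hy t => ?_⟩⟩
  change (s y).2 t = f (s y).1
  rw [← hs.zero y trivial, hα ⟨y, hy⟩]
  rfl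

theorem exists_controlledLift_of_lift {S : Set K} [Nonempty Z] (α : C(S, Z))
    (hαβ : ∀ y, f (α y) = β y) :
    ∃ s : K → Z × C(I, Z'), (∀ y : S, s y = (α y, .const I (β y))) ∧
      ∀ A ⊆ S, ∀ R, A ⊆ β ⁻¹' R → IsControlledLift f β R A s := by
  let s : K → Z × C(I, Z') := Function.extend Subtype.val (fun y : S => (α y, .const I (β y)))
    fun y => (Classical.arbitrary Z, .const I (β y))
  have hs (y : S) : s y = (α y, .const I (β y)) := Subtype.val_injective.extend_apply _ _ y
  exact ⟨s, hs, fun A hA R hR => .of_continuousMap (α.comp ⟨Set.inclusion hA, by fun_prop⟩)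
    ⟨fun p => β p.1, by fun_prop⟩ (fun y => hs ⟨y, hA y.2⟩) (fun y => (hαβ ⟨y, hA y.2⟩).symm)
    (fun _ => rfl) fun p => hR p.1.2⟩

theorem exists_gridCell_subset_cover {n : ℕ} {ι : Type*} {U : ι → Set (Fin n → I)}
    (hU : ∀ i, IsOpen (U i)) (hcov : ∀ x, ∃ i, x ∈ U i) :
    ∃ M : ℕ, 0 < M ∧ ∀ x : Fin n → I, ∃ i, gridCell M x ⊆ U i := by
  obtain ⟨δ, hδ, h⟩ := lebesgue_number_lemma_of_metric isCompact_univ hU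
    fun x _ => Set.mem_iUnion.2 (hcov x)
  obtain ⟨M, hM⟩ := exists_nat_gt (1 / δ)
  refine ⟨M, Nat.cast_pos.1 ((one_div_pos.2 hδ).trans hM), fun x => ?_⟩
  obtain ⟨i, hi⟩ := h x trivial
  exact ⟨i, (gridCell_subset_ball ((div_lt_iff₀ hδ).1 hM)).trans hi⟩

theorem HasCubeLifts.of_isOpen_cover {ι : Type*} {O : ι → Set Z'} (hO : ∀ i, IsOpen (O i))
    (hcov : ∀ z, ∃ i, z ∈ O i)
    (h : ∀ J : Set ι, J.Nonempty → HasCubeLifts (f.restrictPreimage (⋂ i ∈ J, O i))) :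
    HasCubeLifts f := by
  intro n α β hαβ
  obtain ⟨M, hM, hMO⟩ := exists_gridCell_subset_cover
    (fun i => (hO i).preimage β.continuous) fun x => hcov (β x)
  let R (C : Set (Fin n → I)) : Set Z' := ⋂ i ∈ {i | C ⊆ β ⁻¹' O i}, O i
  have hR : Monotone R := fun C D hCD => Set.biInter_subset_biInter_left fun i => hCD.trans
  have hβ (C : Set (Fin n → I)) : C ⊆ β ⁻¹' R C := fun y hy => Set.mem_iInter₂.2 fun i hi => hi hy
  have hf (x) : HasCubeLifts (f.restrictPreimage (R (gridCell M x))) := h _ (hMO x)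
  have : Nonempty (R (gridCell M 0)) := ⟨β 0, hβ _ self_mem_gridCell⟩
  have : Nonempty Z := (hf 0).nonempty.map Subtype.val
  obtain ⟨s₀, hs₀, hs₀'⟩ := exists_controlledLift_of_lift α hαβ
  obtain ⟨s, hs, hs'⟩ := exists_controlledLift_skeleton hM hR (fun x => hβ _) hf
    (fun x hx => hs₀' _ (gridCell_subset_boundary hx hM) _ (hβ _)) (n + 1)
  have hs_univ : IsControlledLift f β .univ .univ s := .of_gridCell (fun _ _ => Set.subset_univ _)
    fun x _ => (hs' x (.inr (Nat.lt_succ_of_le (card_finset_fin_le _)))).mono (Set.subset_univ _)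
  exact hs_univ.lifts fun y => (hs y.2).trans (hs₀ y)

theorem IsWeakHomotopyEquiv.of_isOpen_cover {ι : Type*} {O : ι → Set Z'} (hO : ∀ i, IsOpen (O i))
    (hcov : ∀ z, ∃ i, z ∈ O i)
    (h : ∀ J : Set ι, J.Nonempty → IsWeakHomotopyEquiv (f.restrictPreimage (⋂ i ∈ J, O i))) :
    IsWeakHomotopyEquiv f :=
  hasCubeLifts_iff.1 (.of_isOpen_cover hO hcov fun J hJ => hasCubeLifts_iff.2 (h J hJ))

theorem IsWeakHomotopyEquiv.of_isOpen_union {U V : Set Z'} (hU : IsOpen U) (hV : IsOpen V)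
    (hUV : ∀ z, z ∈ U ∨ z ∈ V) (hfU : IsWeakHomotopyEquiv (f.restrictPreimage U))
    (hfV : IsWeakHomotopyEquiv (f.restrictPreimage V))
    (hfUV : IsWeakHomotopyEquiv (f.restrictPreimage (U ∩ V))) : IsWeakHomotopyEquiv f := by
  refine .of_isOpen_cover (O := fun b => cond b U V) (Bool.forall_bool.2 ⟨hV, hU⟩)
    (fun z => (hUV z).elim (⟨true, ·⟩) (⟨false, ·⟩)) fun J hJ => ?_
  have hJ_mem (z) : z ∈ ⋂ b ∈ J, cond b U V ↔ (true ∈ J → z ∈ U) ∧ (false ∈ J → z ∈ V) := by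
    simp [Bool.forall_bool, and_comm]
  have hJ' : ⋂ b ∈ J, cond b U V = U ∩ V ∨ ⋂ b ∈ J, cond b U V = U ∨
      ⋂ b ∈ J, cond b U V = V := by
    by_cases ht : true ∈ J <;> by_cases hf : false ∈ J
    · exact .inl (Set.ext fun z => by simp [hJ_mem, ht, hf])
    · exact .inr (.inl (Set.ext fun z => by simp [hJ_mem, ht, hf]))
    · exact .inr (.inr (Set.ext fun z => by simp [hJ_mem, ht, hf]))
    · obtain ⟨_ | _, hb⟩ := hJ
      exacts [(hf hb).elim, (ht hb).elim]
  rcases hJ' with h | h | h <;> rwa [h]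

end OpenCover

section DoubleCylinder

variable {L Z C R : Type*} [TopologicalSpace L] [TopologicalSpace Z] [TopologicalSpace C]
  [TopologicalSpace R]

/-- The relation attaching `L × {0}` to `Z` along `j` and `L × {1}` to `C` along `q`. -/
inductive CylRel (j : C(L, Z)) (q : C(L, C)) : Z ⊕ (L × I) ⊕ C → Z ⊕ (L × I) ⊕ C → Prop
  | left (l : L) : CylRel j q (Sum.inr (Sum.inl (l, 0))) (Sum.inl (j l))
  | right (l : L) : CylRel j q (Sum.inr (Sum.inl (l, 1))) (Sum.inr (Sum.inr (q l)))

/-- The double mapping cylinder (homotopy pushout) of `Z ← L → C`. -/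
abbrev DoubleCyl (j : C(L, Z)) (q : C(L, C)) : Type _ := Quot (CylRel j q)

namespace DoubleCyl

/-- The left end of the double mapping cylinder. -/
def inl (j : C(L, Z)) (q : C(L, C)) : C(Z, DoubleCyl j q) :=
  ⟨fun z => Quot.mk _ (Sum.inl z), by fun_prop⟩

/-- The map from the cylinder on `L` to the double mapping cylinder. -/
def mid (j : C(L, Z)) (q : C(L, C)) : C(L × I, DoubleCyl j q) :=
  ⟨fun p => Quot.mk _ (Sum.inr (Sum.inl p)), by fun_prop⟩

/-- The right end of the double mapping cylinder. -/
def inr (j : C(L, Z)) (q : C(L, C)) : C(C, DoubleCyl j q) :=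
  ⟨fun c => Quot.mk _ (Sum.inr (Sum.inr c)), by fun_prop⟩

variable {j : C(L, Z)} {q : C(L, C)}

theorem mid_zero (l : L) : mid j q (l, 0) = inl j q (j l) := Quot.sound (CylRel.left l)

theorem mid_one (l : L) : mid j q (l, 1) = inr j q (q l) := Quot.sound (CylRel.right l)

theorem induction {p : DoubleCyl j q → Prop} (inl : ∀ z, p (inl j q z))
    (mid : ∀ l u, p (mid j q (l, u))) (inr : ∀ c, p (inr j q c)) (m : DoubleCyl j q) : p m := by
  obtain ⟨z | x | c⟩ := m
  exacts [inl z, mid x.1 x.2, inr c]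

/-- The map out of the double mapping cylinder given by compatible maps on its three pieces. -/
def desc (f : C(Z, R)) (g : C(L × I, R)) (k : C(C, R)) (h₀ : ∀ l, g (l, 0) = f (j l))
    (h₁ : ∀ l, g (l, 1) = k (q l)) : C(DoubleCyl j q, R) :=
  ⟨Quot.lift (Sum.elim f (Sum.elim g k)) (by rintro _ _ (l | l); exacts [h₀ l, h₁ l]),
    continuous_quot_lift _ (by fun_prop)⟩

theorem exists_homotopy_desc (f : C(Z × I, R)) (g : C((L × I) × I, R)) (k : C(C × I, R))
    (h₀ : ∀ l t, g ((l, 0), t) = f (j l, t)) (h₁ : ∀ l t, g ((l, 1), t) = k (q l, t)) :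
    ∃ d : C(DoubleCyl j q × I, R), (∀ z t, d (inl j q z, t) = f (z, t)) ∧
      (∀ x t, d (mid j q x, t) = g (x, t)) ∧ ∀ c t, d (inr j q c, t) = k (c, t) :=
  ⟨(desc f.curry g.curry k.curry (fun l => ContinuousMap.ext (h₀ l))
    fun l => ContinuousMap.ext (h₁ l)).uncurry, fun _ _ => rfl, fun _ _ => rfl, fun _ _ => rfl⟩

/-- The projection of the double mapping cylinder to `I`, with value `0` on the left end and `1` on
the right end. -/
def height : C(DoubleCyl j q, I) := desc (.const _ 0) .snd (.const _ 1) (fun _ => rfl) fun _ => rfl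

section Embedding

theorem isEmbedding_of_forall_exists_preimage_eq {k : C(Z, R)}
    (h : ∀ O : Set Z, ∃ D : Set R, k ⁻¹' D = O ∧ (IsOpen O → IsOpen D)) : IsEmbedding k where
  eq_induced := le_antisymm k.continuous.le_induced fun O hO =>
    have ⟨D, hDO, hD⟩ := h O
    isOpen_induced_iff.2 ⟨D, hD hO, hDO⟩
  injective x y hxy := by
    obtain ⟨D, hD, -⟩ := h {y}
    have hx : k x ∈ D := hxy ▸ hD.ge rfl
    exact hD.le hx

theorem exists_preimage_eq (A : Set Z) (B : Set (L × I)) (E : Set C)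
    (h₀ : ∀ l, (l, 0) ∈ B ↔ j l ∈ A) (h₁ : ∀ l, (l, 1) ∈ B ↔ q l ∈ E) :
    ∃ D : Set (DoubleCyl j q), inl j q ⁻¹' D = A ∧ mid j q ⁻¹' D = B ∧ inr j q ⁻¹' D = E ∧
      (IsOpen A → IsOpen B → IsOpen E → IsOpen D) := by
  let s : Z ⊕ (L × I) ⊕ C → Prop := Sum.elim (· ∈ A) (Sum.elim (· ∈ B) (· ∈ E))
  refine ⟨Quot.lift s ?_, rfl, rfl, rfl, fun hA hB hE => ?_⟩
  · rintro _ _ (l | l)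
    exacts [propext (h₀ l), propext (h₁ l)]
  · exact isQuotientMap_quot_mk.isOpen_preimage.1
      (isOpen_sum_iff.2 ⟨hA, isOpen_sum_iff.2 ⟨hB, hE⟩⟩)

theorem isEmbedding_inl : IsEmbedding (inl j q) :=
  isEmbedding_of_forall_exists_preimage_eq fun O => by
    obtain ⟨D, hDO, -, -, hD⟩ := exists_preimage_eq (j := j) (q := q) O
      {x : L × I | j x.1 ∈ O ∧ x.2 < 1} ∅ (by simp) (by simp)
    exact ⟨D, hDO, fun hO => hD hO ((hO.preimage (by fun_prop)).inter
      (isOpen_Iio.preimage continuous_snd)) isOpen_empty⟩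

theorem isEmbedding_inr : IsEmbedding (inr j q) :=
  isEmbedding_of_forall_exists_preimage_eq fun O => by
    obtain ⟨D, -, -, hDO, hD⟩ := exists_preimage_eq (j := j) (q := q) ∅
      {x : L × I | q x.1 ∈ O ∧ 0 < x.2} O (by simp) (by simp)
    exact ⟨D, hDO, fun hO => hD isOpen_empty ((hO.preimage (by fun_prop)).inter
      (isOpen_Ioi.preimage continuous_snd)) hO⟩

/-- The slice of the double mapping cylinder at height `u`. -/
def level (j : C(L, Z)) (q : C(L, C)) (u : I) : C(L, DoubleCyl j q) :=
  (mid j q).comp ⟨fun l => (l, u), by fun_prop⟩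

theorem isEmbedding_level {u : I} (h₀ : 0 < u) (h₁ : u < 1) : IsEmbedding (level j q u) :=
  isEmbedding_of_forall_exists_preimage_eq fun O => by
    obtain ⟨D, -, hDO, -, hD⟩ := exists_preimage_eq (j := j) (q := q) ∅
      {x : L × I | x.1 ∈ O ∧ 0 < x.2 ∧ x.2 < 1} ∅ (by simp) (by simp)
    refine ⟨D, ?_, fun hO => hD isOpen_empty ((hO.preimage continuous_fst).inter
      (isOpen_Ioo.preimage continuous_snd)) isOpen_empty⟩
    have : level j q u ⁻¹' D = (fun l => (l, u)) ⁻¹' (mid j q ⁻¹' D) := rfl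
    simp [this, hDO, h₀, h₁]

end Embedding

/-- `k` identifies `P` with the part of the double mapping cylinder at height `c`. -/
structure IsLevel {P : Type*} [TopologicalSpace P] (k : C(P, DoubleCyl j q)) (c : I) : Prop where
  isEmbedding : IsEmbedding k
  range_eq : Set.range k = height ⁻¹' {c}

theorem isLevel_inl : IsLevel (inl j q) 0 := by
  refine ⟨isEmbedding_inl, Set.Subset.antisymm (by rintro _ ⟨z, rfl⟩; rfl) fun m hm => ?_⟩
  induction m using induction with
  | inl z => exact ⟨z, rfl⟩
  | mid l u =>
    obtain rfl : u = 0 := hm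
    exact ⟨j l, (mid_zero l).symm⟩
  | inr c => exact (one_ne_zero (α := I) hm).elim

theorem isLevel_inr : IsLevel (inr j q) 1 := by
  refine ⟨isEmbedding_inr, Set.Subset.antisymm (by rintro _ ⟨z, rfl⟩; rfl) fun m hm => ?_⟩
  induction m using induction with
  | inl z => exact (zero_ne_one (α := I) hm).elim
  | mid l u =>
    obtain rfl : u = 1 := hm
    exact ⟨q l, (mid_one l).symm⟩
  | inr c => exact ⟨c, rfl⟩

theorem isLevel_level {u : I} (h₀ : 0 < u) (h₁ : u < 1) : IsLevel (level j q u) u := by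
  refine ⟨isEmbedding_level h₀ h₁, Set.Subset.antisymm (by rintro _ ⟨z, rfl⟩; rfl) fun m hm => ?_⟩
  induction m using induction with
  | inl z => exact (h₀.ne hm).elim
  | mid l v =>
    obtain rfl : v = u := hm
    exact ⟨l, rfl⟩
  | inr c => exact (h₁.ne' hm).elim

section Stretch

theorem exists_homotopyEquiv_of_deformation {k : C(Z, R)} (hk : IsEmbedding k) {W : Set R}
    (hkW : Set.range k ⊆ W) (Φ : C(R × I, R)) (h₀ : ∀ m, Φ (m, 0) = m)
    (hΦ : ∀ m ∈ W, ∀ t, Φ (m, t) ∈ W) (h₁ : ∀ m ∈ W, Φ (m, 1) ∈ Set.range k)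
    (hΦk : ∀ z, Φ (k z, 1) = k z) :
    ∃ e : ContinuousMap.HomotopyEquiv Z W, ∀ z, (e.toFun z : R) = k z := by
  let incl : C(Z, W) := ⟨fun z => ⟨k z, hkW ⟨z, rfl⟩⟩, by fun_prop⟩
  let push : C(W, Set.range k) := ⟨fun m => ⟨Φ (m, 1), h₁ m m.2⟩, by fun_prop⟩
  let retr : C(W, Z) := .comp ⟨hk.toHomeomorph.symm, hk.toHomeomorph.symm.continuous⟩ push
  have hretr (m : W) : k (retr m) = Φ (m, 1) :=
    congrArg Subtype.val (hk.toHomeomorph.apply_symm_apply (push m))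
  let H : C(I × W, W) := ⟨fun p => ⟨Φ (p.2, p.1), hΦ p.2 p.2.2 p.1⟩, by fun_prop⟩
  refine ⟨⟨incl, retr, ?_, ?_⟩, fun _ => rfl⟩
  · rw [show retr.comp incl = .id Z from
      ContinuousMap.ext fun z => hk.injective ((hretr _).trans (hΦk z))]
  · exact .symm ⟨⟨H, fun m => Subtype.ext (h₀ m), fun m => Subtype.ext (hretr m).symm⟩⟩

theorem exists_stretch {ρ : C(I, I)} (h₀ : ρ 0 = 0) (h₁ : ρ 1 = 1) :
    ∃ Φ : C(DoubleCyl j q × I, DoubleCyl j q), (∀ m, Φ (m, 0) = m) ∧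
      (∀ m t, height (Φ (m, t)) = Set.Icc.convexComb (height m) (ρ (height m)) t) ∧
      ∀ m, ρ (height m) = height m → Φ (m, 1) = m := by
  have hconv {u : I} (t : I) (hu : ρ u = u) : Set.Icc.convexComb u (ρ u) t = u := by
    rw [hu, Set.Icc.convexComb_eq]
  have hc : Continuous fun p : (L × I) × I => Set.Icc.convexComb p.1.2 (ρ p.1.2) p.2 :=
    Set.Icc.continuous_convexComb_prod.comp (f := fun p : (L × I) × I => (p.1.2, ρ p.1.2, p.2))
      (by fun_prop)
  obtain ⟨Φ, hΦl, hΦm, hΦr⟩ := exists_homotopy_desc (j := j) (q := q) ((inl j q).comp .fst)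
    ((mid j q).comp ⟨fun p => (p.1.1, _), continuous_fst.fst.prodMk hc⟩) ((inr j q).comp .fst)
    (fun l t => (congrArg (fun u => mid j q (l, u)) (hconv t h₀)).trans (mid_zero l))
    (fun l t => (congrArg (fun u => mid j q (l, u)) (hconv t h₁)).trans (mid_one l))
  refine ⟨Φ, fun m => ?_, fun m t => ?_, fun m hm => ?_⟩ <;> induction m using induction with
  | inl z => ?_
  | mid l u => ?_
  | inr c => ?_
  · exact hΦl z 0
  · exact (hΦm _ 0).trans (congrArg (fun v => mid j q (l, v)) (Set.Icc.convexComb_zero _ _))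
  · exact hΦr c 0
  · exact (congrArg height (hΦl z t)).trans (hconv t h₀).symm
  · exact congrArg height (hΦm _ t)
  · exact (congrArg height (hΦr c t)).trans (hconv t h₁).symm
  · exact hΦl z 1
  · exact (hΦm _ 1).trans (congrArg (fun v => mid j q (l, v)) (hconv 1 hm))
  · exact hΦr c 1

theorem exists_endpoint_fixing_collapse {S : Set I} (hS : IsClosed S) {c : I} (h₀ : 0 ∈ S → c = 0)
    (h₁ : 1 ∈ S → c = 1) : ∃ ρ : C(I, I), ρ 0 = 0 ∧ ρ 1 = 1 ∧ ∀ u ∈ S, ρ u = c := by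
  obtain ⟨φ, hφ₀, hφ₁, hφ⟩ := exists_continuous_zero_one_of_isClosed
    ((Set.toFinite ({0, 1} \ S)).isClosed) hS Set.disjoint_sdiff_left
  let ψ : C(I, I) := ⟨fun u => ⟨φ u, hφ u⟩, by fun_prop⟩
  have hend {u : I} (hu : u ∈ ({0, 1} : Set I)) (huS : u ∈ S → c = u) :
      Set.Icc.convexComb u c (ψ u) = u := by
    by_cases h : u ∈ S
    · rw [huS h, Set.Icc.convexComb_eq]
    · rw [show ψ u = 0 from Subtype.ext (hφ₀ ⟨hu, h⟩), Set.Icc.convexComb_zero]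
  refine ⟨⟨fun u => Set.Icc.convexComb u c (ψ u), Set.Icc.continuous_convexComb_prod.comp
    (f := fun u : I => (u, c, ψ u)) (by fun_prop)⟩, hend (by simp) h₀, hend (by simp) h₁,
    fun u hu => ?_⟩
  have hψ : ψ u = 1 := Subtype.ext (hφ₁ hu)
  exact (congrArg (Set.Icc.convexComb u c) hψ).trans (Set.Icc.convexComb_one u c)

theorem exists_homotopyEquiv_height_preimage {P : Type*} [TopologicalSpace P]
    {k : C(P, DoubleCyl j q)} {c : I} (hk : IsLevel k c) {S : Set I} [S.OrdConnected]
    (hc : c ∈ S) {ρ : C(I, I)} (h₀ : ρ 0 = 0) (h₁ : ρ 1 = 1) (hρ : ∀ u ∈ S, ρ u = c) :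
    ∃ e : ContinuousMap.HomotopyEquiv P (height ⁻¹' S : Set (DoubleCyl j q)),
      ∀ p, (e.toFun p : DoubleCyl j q) = k p := by
  have hconv {u : I} (hu : u ∈ S) (t : I) : Set.Icc.convexComb u c t ∈ S := by
    rcases le_total u c with h | h
    · exact Set.OrdConnected.out' hu hc
        ⟨Set.Icc.le_convexComb h t, Set.Icc.convexComb_le h t⟩
    · rw [← symm_symm t, Set.Icc.convexComb_symm]
      exact Set.OrdConnected.out' hc hu
        ⟨Set.Icc.le_convexComb h _, Set.Icc.convexComb_le h _⟩
  have hk_height (p : P) : height (k p) = c := hk.range_eq.le ⟨p, rfl⟩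
  obtain ⟨Φ, hΦ₀, hΦ, hΦ₁⟩ := exists_stretch (j := j) (q := q) h₀ h₁
  refine exists_homotopyEquiv_of_deformation hk.isEmbedding ?_ Φ hΦ₀ (fun m hm t => ?_)
    (fun m hm => ?_) fun p => hΦ₁ _ ?_
  · exact hk.range_eq.trans_subset (Set.preimage_mono (Set.singleton_subset_iff.2 hc))
  · rw [Set.mem_preimage, hΦ, hρ _ hm]
    exact hconv hm t
  · rw [hk.range_eq, Set.mem_preimage, hΦ, Set.Icc.convexComb_one]
    exact hρ _ hm
  · rw [hk_height, hρ c hc]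

end Stretch

section Map

variable {L' Z' C' : Type*} [TopologicalSpace L'] [TopologicalSpace Z'] [TopologicalSpace C']
  {j' : C(L', Z')} {q' : C(L', C')}

theorem isWeakHomotopyEquiv_restrictPreimage {P P' : Type*} [TopologicalSpace P]
    [TopologicalSpace P'] {F : C(DoubleCyl j q, DoubleCyl j' q')}
    (hF : ∀ m, height (F m) = height m) {g : C(P, P')} (hg : IsWeakHomotopyEquiv g)
    {k : C(P, DoubleCyl j q)} {k' : C(P', DoubleCyl j' q')}
    (hFk : ∀ p, F (k p) = k' (g p)) {c : I} (hk : IsLevel k c) (hk' : IsLevel k' c) {S : Set I}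
    [S.OrdConnected] (hc : c ∈ S) (h₀ : 0 ∈ closure S → c = 0) (h₁ : 1 ∈ closure S → c = 1) :
    IsWeakHomotopyEquiv (F.restrictPreimage (height ⁻¹' S)) := by
  obtain ⟨ρ, hρ₀, hρ₁, hρ⟩ := exists_endpoint_fixing_collapse isClosed_closure h₀ h₁
  replace hρ (u) (hu : u ∈ S) : ρ u = c := hρ u (subset_closure hu)
  obtain ⟨e', he'⟩ := exists_homotopyEquiv_height_preimage hk' hc hρ₀ hρ₁ hρ
  have hW : F ⁻¹' (height ⁻¹' S) = height ⁻¹' S := by ext m; simp [hF]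
  obtain ⟨e, he⟩ : ∃ e : ContinuousMap.HomotopyEquiv P (F ⁻¹' (height ⁻¹' S)),
      ∀ p, (e.toFun p : DoubleCyl j q) = k p :=
    hW ▸ exists_homotopyEquiv_height_preimage hk hc hρ₀ hρ₁ hρ
  refine .of_square e e' hg (ContinuousMap.ext fun p => Subtype.ext ?_)
  exact (congrArg F (he p)).trans ((hFk p).trans (he' (g p)).symm)

theorem isWeakHomotopyEquiv_of_levelwise {fZ : C(Z, Z')} {fL : C(L, L')} {fC : C(C, C')}
    (hZ : IsWeakHomotopyEquiv fZ) (hL : IsWeakHomotopyEquiv fL) (hC : IsWeakHomotopyEquiv fC)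
    {F : C(DoubleCyl j q, DoubleCyl j' q')} (hF_inl : ∀ z, F (inl j q z) = inl j' q' (fZ z))
    (hF_mid : ∀ l u, F (mid j q (l, u)) = mid j' q' (fL l, u))
    (hF_inr : ∀ c, F (inr j q c) = inr j' q' (fC c)) : IsWeakHomotopyEquiv F := by
  have hF (m) : height (F m) = height m := by
    induction m using induction with
    | inl z => exact congrArg height (hF_inl z)
    | mid l u => exact congrArg height (hF_mid l u)
    | inr c => exact congrArg height (hF_inr c)
  obtain ⟨c, h0c, hc1⟩ := exists_between (zero_lt_one (α := I))
  obtain ⟨a, h0a, hac⟩ := exists_between h0c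
  obtain ⟨b, hcb, hb1⟩ := exists_between hc1
  have hIio : closure (Set.Iio b) ⊆ Set.Iic b :=
    closure_minimal Set.Iio_subset_Iic_self isClosed_Iic
  have hIoi : closure (Set.Ioi a) ⊆ Set.Ici a :=
    closure_minimal Set.Ioi_subset_Ici_self isClosed_Ici
  have h1 : 1 ∉ closure (Set.Iio b) := fun h => hb1.not_ge (hIio h)
  have h0 : 0 ∉ closure (Set.Ioi a) := fun h => h0a.not_ge (hIoi h)
  refine .of_isOpen_union (isOpen_Iio.preimage height.continuous)
    (isOpen_Ioi.preimage height.continuous)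
    (fun m => (lt_or_ge (height m) b).imp_right (hac.trans hcb).trans_le) ?_ ?_ ?_
  · exact isWeakHomotopyEquiv_restrictPreimage hF hZ hF_inl isLevel_inl isLevel_inl
      (h0c.trans hcb) (fun _ => rfl) fun h => (h1 h).elim
  · exact isWeakHomotopyEquiv_restrictPreimage hF hC hF_inr isLevel_inr isLevel_inr
      (hac.trans hc1) (fun h => (h0 h).elim) fun _ => rfl
  · exact isWeakHomotopyEquiv_restrictPreimage hF hL (hF_mid · c)
      (isLevel_level h0c hc1) (isLevel_level h0c hc1) (S := Set.Iio b ∩ Set.Ioi a) ⟨hcb, hac⟩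
      (fun h => (h0 (closure_mono Set.inter_subset_right h)).elim)
      fun h => (h1 (closure_mono Set.inter_subset_left h)).elim

end Map

end DoubleCyl

end DoubleCylinder

section Gluing

variable {L Z C Q : Type*} [TopologicalSpace L] [TopologicalSpace Z] [TopologicalSpace C]
  [TopologicalSpace Q]

theorem DoubleCyl.exists_slide {j : C(L, Z)} {q : C(L, C)} (hj : IsHCofibration j) :
    ∃ τ : C(Z × I, DoubleCyl j q), (∀ z, τ (z, 0) = DoubleCyl.inl j q z) ∧
      ∀ l t, τ (j l, t) = DoubleCyl.mid j q (l, t) := by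
  have hj' := isHCofibration_iff.1 hj
  let e := hj.1.isEmbedding.toHomeomorph
  obtain ⟨τ, hτ₀, hτ⟩ := hj'.2.exists_homotopy_extension (DoubleCyl.inl j q)
    ((DoubleCyl.mid j q).comp ⟨fun p => (e.symm p.1, p.2), by fun_prop⟩) fun x => by
      obtain ⟨l, rfl⟩ := e.surjective x
      exact (congrArg (fun l => DoubleCyl.mid j q (l, 0)) (e.symm_apply_apply l)).trans
        (DoubleCyl.mid_zero l)
  refine ⟨τ, hτ₀, fun l t => (hτ (e l) t).trans ?_⟩
  exact congrArg (fun l => DoubleCyl.mid j q (l, t)) (e.symm_apply_apply l)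

/-- The relation on `Z ⊕ C` whose quotient is the pushout of `Z ← L → C`. -/
def GlueRel (j : C(L, Z)) (q : C(L, C)) (a b : Z ⊕ C) : Prop :=
  ∃ l, a = Sum.inl (j l) ∧ b = Sum.inr (q l)

/-- `Q`, with the maps `iZ` and `iC`, is the pushout of `Z ← L → C`. -/
structure IsGluing (j : C(L, Z)) (q : C(L, C)) (iZ : C(Z, Q)) (iC : C(C, Q)) : Prop where
  comm : ∀ l, iZ (j l) = iC (q l)
  isQuotientMap : IsQuotientMap (Sum.elim iZ iC)
  eqvGen : ∀ a b, Sum.elim iZ iC a = Sum.elim iZ iC b →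
    Relation.EqvGen (GlueRel j q) a b

namespace IsGluing

variable {j : C(L, Z)} {q : C(L, C)} {iZ : C(Z, Q)} {iC : C(C, Q)}

theorem of_isClosedEmbedding (hZ : IsClosedEmbedding iZ) (hC : IsClosedEmbedding iC)
    (hZC : ∀ x, x ∈ Set.range iZ ∨ x ∈ Set.range iC) (comm : ∀ l, iZ (j l) = iC (q l))
    (pullback : ∀ z c, iZ z = iC c → ∃ l, j l = z ∧ q l = c) : IsGluing j q iZ iC where
  comm := comm
  isQuotientMap := by
    refine (hZ.isClosedMap.sumElim hC.isClosedMap).isQuotientMap (by fun_prop) fun x => ?_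
    rcases hZC x with ⟨z, rfl⟩ | ⟨c, rfl⟩
    exacts [⟨Sum.inl z, rfl⟩, ⟨Sum.inr c, rfl⟩]
  eqvGen := by
    have hrel (z : Z) (c : C) (h : iZ z = iC c) : GlueRel j q (Sum.inl z) (Sum.inr c) := by
      obtain ⟨l, rfl, rfl⟩ := pullback z c h
      exact ⟨l, rfl, rfl⟩
    rintro (z | c) (z' | c') h
    · obtain rfl := hZ.injective h
      exact .refl _
    · exact .rel _ _ (hrel z c' h)
    · exact .symm _ _ (.rel _ _ (hrel z' c h.symm))
    · obtain rfl := hC.injective h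
      exact .refl _

theorem of_quot {r : Z → Z → Prop} {s : C(C, Z)}
    (comm : ∀ l, Quot.mk r (j l) = Quot.mk r (s (q l)))
    (hr : ∀ z w, r z w → Relation.EqvGen (GlueRel j q) (Sum.inl z) (Sum.inl w))
    (hs : ∀ c, Relation.EqvGen (GlueRel j q) (Sum.inl (s c)) (Sum.inr c)) :
    IsGluing j q (⟨Quot.mk r, continuous_quot_mk⟩ : C(Z, Quot r))
      ⟨fun c => Quot.mk r (s c), continuous_quot_mk.comp s.continuous⟩ where
  comm := comm
  isQuotientMap := .of_comp continuous_inl (by fun_prop) (g := Sum.elim _ _) isQuotientMap_quot_mk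
  eqvGen := by
    have hquot (z w : Z) (h : Quot.mk r z = Quot.mk r w) :
        Relation.EqvGen (GlueRel j q) (Sum.inl z) (Sum.inl w) := by
      have hzw := Quot.eqvGen_exact h
      clear h
      induction hzw with
      | rel z w h => exact hr z w h
      | refl z => exact .refl _
      | symm z w _ ih => exact .symm _ _ ih
      | trans z w v _ _ ih ih' => exact .trans _ _ _ ih ih'
    rintro (z | c) (z' | c') h
    · exact hquot z z' h
    · exact .trans _ _ _ (hquot z _ h) (hs c')
    · exact .trans _ _ _ (.symm _ _ (hs c)) (hquot _ z' h)
    · exact .trans _ _ _ (.symm _ _ (hs c)) (.trans _ _ _ (hquot _ _ h) (hs c'))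

theorem induction (h : IsGluing j q iZ iC) {p : Q → Prop} (left : ∀ z, p (iZ z))
    (right : ∀ c, p (iC c)) (x : Q) : p x := by
  obtain ⟨z | c, rfl⟩ := h.isQuotientMap.surjective x
  exacts [left z, right c]

section Desc

variable {R : Type*} [TopologicalSpace R]

theorem exists_desc (h : IsGluing j q iZ iC) (f : C(Z, R)) (k : C(C, R))
    (hfk : ∀ l, f (j l) = k (q l)) :
    ∃ d : C(Q, R), (∀ z, d (iZ z) = f z) ∧ ∀ c, d (iC c) = k c := by
  have hq : IsQuotientMap (⟨Sum.elim iZ iC, by fun_prop⟩ : C(Z ⊕ C, Q)) := h.isQuotientMap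
  let g : C(Z ⊕ C, R) := ⟨Sum.elim f k, by fun_prop⟩
  have hg : Function.FactorsThrough g (Sum.elim iZ iC) := fun a b hab => by
    have hrel := h.eqvGen a b hab
    clear hab
    induction hrel with
    | rel _ _ hl =>
      obtain ⟨l, rfl, rfl⟩ := hl
      exact hfk l
    | refl => rfl
    | symm _ _ _ ih => exact ih.symm
    | trans _ _ _ _ _ ih ih' => exact ih.trans ih'
  have hd := hq.lift_comp g hg
  exact ⟨hq.lift g hg, fun z => DFunLike.congr_fun hd (Sum.inl z),
    fun c => DFunLike.congr_fun hd (Sum.inr c)⟩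

theorem exists_homotopy_desc (h : IsGluing j q iZ iC) (f : C(Z × I, R)) (k : C(C × I, R))
    (hfk : ∀ l t, f (j l, t) = k (q l, t)) :
    ∃ d : C(Q × I, R), (∀ z t, d (iZ z, t) = f (z, t)) ∧ ∀ c t, d (iC c, t) = k (c, t) := by
  obtain ⟨d, hdZ, hdC⟩ := h.exists_desc f.curry k.curry fun l => ContinuousMap.ext (hfk l)
  exact ⟨d.uncurry, fun z t => DFunLike.congr_fun (hdZ z) t,
    fun z t => DFunLike.congr_fun (hdC z) t⟩

end Desc

theorem exists_homotopyEquiv (h : IsGluing j q iZ iC) (hj : IsHCofibration j) :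
    ∃ e : ContinuousMap.HomotopyEquiv (DoubleCyl j q) Q,
      (∀ z, e.toFun (DoubleCyl.inl j q z) = iZ z) ∧
      (∀ l u, e.toFun (DoubleCyl.mid j q (l, u)) = iC (q l)) ∧
      ∀ c, e.toFun (DoubleCyl.inr j q c) = iC c := by
  obtain ⟨τ, hτ₀, hτ⟩ := DoubleCyl.exists_slide (q := q) hj
  have hτ₁ (l : L) : τ (j l, 1) = DoubleCyl.inr j q (q l) := (hτ l 1).trans (DoubleCyl.mid_one l)
  let e : C(DoubleCyl j q, Q) := DoubleCyl.desc iZ (iC.comp (q.comp .fst)) iC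
    (fun l => (h.comm l).symm) fun _ => rfl
  obtain ⟨s, hsZ, hsC⟩ := h.exists_desc (τ.comp ⟨fun z => (z, 1), by fun_prop⟩)
    (DoubleCyl.inr j q) hτ₁
  obtain ⟨φ, hφZ, hφC⟩ := h.exists_homotopy_desc (e.comp τ) (iC.comp .fst)
    fun l t => congrArg e (hτ l t)
  obtain ⟨ψ, hψl, hψm, hψr⟩ := DoubleCyl.exists_homotopy_desc (j := j) (q := q) τ
    ((DoubleCyl.mid j q).comp ⟨fun p => (p.1.1, max p.1.2 p.2), by fun_prop⟩)
    ((DoubleCyl.inr j q).comp .fst) (fun l t => by simp [hτ])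
    (fun l t => by simp [max_eq_left (le_one' : t ≤ 1), DoubleCyl.mid_one])
  have hφ₀ : ∀ x, φ (x, 0) = x :=
    h.induction (fun z => (hφZ z 0).trans (congrArg e (hτ₀ z))) fun c => hφC c 0
  have hφ₁ : ∀ x, φ (x, 1) = e (s x) :=
    h.induction (fun z => (hφZ z 1).trans (congrArg e (hsZ z)).symm)
      fun c => (hφC c 1).trans (congrArg e (hsC c)).symm
  have hψ₀ : ∀ m, ψ (m, 0) = m := DoubleCyl.induction (fun z => (hψl z 0).trans (hτ₀ z))
    (fun l u => by simp [hψm]) fun c => hψr c 0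
  have hψ₁ : ∀ m, ψ (m, 1) = s (e m) := DoubleCyl.induction
    (fun z => (hψl z 1).trans (hsZ z).symm)
    (fun l u => by
      refine (hψm (l, u) 1).trans (.trans ?_ (hsC (q l)).symm)
      simp [max_eq_right (le_one' : u ≤ 1), DoubleCyl.mid_one])
    fun c => (hψr c 1).trans (hsC c).symm
  exact ⟨⟨e, s, .symm ⟨⟨ψ.comp .prodSwap, hψ₀, hψ₁⟩⟩, .symm ⟨⟨φ.comp .prodSwap, hφ₀, hφ₁⟩⟩⟩,
    fun _ => rfl, fun _ _ => rfl, fun _ => rfl⟩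

variable {L' Z' C' Q' : Type*} [TopologicalSpace L'] [TopologicalSpace Z'] [TopologicalSpace C']
  [TopologicalSpace Q'] {j' : C(L', Z')} {q' : C(L', C')} {iZ' : C(Z', Q')} {iC' : C(C', Q')}
  {fZ : C(Z, Z')} {fL : C(L, L')} {fC : C(C, C')}

theorem isWeakHomotopyEquiv (h : IsGluing j q iZ iC) (h' : IsGluing j' q' iZ' iC')
    (hj : IsHCofibration j) (hj' : IsHCofibration j')
    (hfj : ∀ l, fZ (j l) = j' (fL l)) (hfq : ∀ l, fC (q l) = q' (fL l))
    (hZ : IsWeakHomotopyEquiv fZ) (hL : IsWeakHomotopyEquiv fL) (hC : IsWeakHomotopyEquiv fC)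
    {G : C(Q, Q')} (hGZ : ∀ z, G (iZ z) = iZ' (fZ z)) (hGC : ∀ c, G (iC c) = iC' (fC c)) :
    IsWeakHomotopyEquiv G := by
  obtain ⟨e, he_inl, he_mid, he_inr⟩ := h.exists_homotopyEquiv hj
  obtain ⟨e', he'_inl, he'_mid, he'_inr⟩ := h'.exists_homotopyEquiv hj'
  let F : C(DoubleCyl j q, DoubleCyl j' q') := DoubleCyl.desc ((DoubleCyl.inl j' q').comp fZ)
    ((DoubleCyl.mid j' q').comp (fL.prodMap (.id I))) ((DoubleCyl.inr j' q').comp fC)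
    (fun l => (DoubleCyl.mid_zero _).trans (congrArg _ (hfj l).symm))
    fun l => (DoubleCyl.mid_one _).trans (congrArg _ (hfq l).symm)
  refine .of_square e e' (g := F) (DoubleCyl.isWeakHomotopyEquiv_of_levelwise hZ hL hC
    (fun _ => rfl) (fun _ _ => rfl) fun _ => rfl) (ContinuousMap.ext ?_)
  refine DoubleCyl.induction (fun z => ?_) (fun l u => ?_) fun c => ?_
  · exact (congrArg G (he_inl z)).trans ((hGZ z).trans (he'_inl (fZ z)).symm)
  · exact (congrArg G (he_mid l u)).trans ((hGC _).trans
      ((congrArg iC' (hfq l)).trans (he'_mid (fL l) u).symm))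
  · exact (congrArg G (he_inr c)).trans ((hGC c).trans (he'_inr (fC c)).symm)

end IsGluing

end Gluing

section ExternalSmash

variable {A B X Y : Type*} [TopologicalSpace A] [TopologicalSpace B] [TopologicalSpace X]
  [TopologicalSpace Y]

theorem IsHCofibration.prodMap_id {i : C(A, X)} (hi : IsHCofibration i) :
    IsHCofibration (i.prodMap (.id B)) := by
  refine isHCofibration_iff.2 ⟨hi.1.prodMap .id, ?_⟩
  have hrange : Set.range (i.prodMap (.id B)) = wedgeSet (Set.range i) ∅ := by
    ext p
    simp [wedgeSet, Prod.ext_iff]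
  exact hrange ▸ (isHCofibration_iff.1 hi).2.wedgeSet .empty

/-- The inclusion of `X × i_Y(B) ∪ i_X(A) × Y` into `X × Y`. -/
def wedgeIncl (iX : C(A, X)) (iY : C(B, Y)) : C(wedgeSet (Set.range iX) (Set.range iY), X × Y) :=
  ⟨Subtype.val, by fun_prop⟩

theorem isHCofibration_wedgeIncl {iX : C(A, X)} {iY : C(B, Y)} (hX : IsHCofibration iX)
    (hY : IsHCofibration iY) : IsHCofibration (wedgeIncl iX iY) := by
  have h := (isHCofibration_iff.1 hX).2.wedgeSet (isHCofibration_iff.1 hY).2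
  have hrange : Set.range (wedgeIncl iX iY) = wedgeSet (Set.range iX) (Set.range iY) :=
    Subtype.range_val
  exact isHCofibration_iff.2 ⟨h.1.isClosedEmbedding_subtypeVal, by rwa [hrange]⟩

/-- The inclusion of `X × B` into the wedge `X × i_Y(B) ∪ i_X(A) × Y`. -/
def wedgeInl (iX : C(A, X)) (iY : C(B, Y)) :
    C(X × B, wedgeSet (Set.range iX) (Set.range iY)) :=
  ⟨fun p => ⟨(p.1, iY p.2), .inr ⟨p.2, rfl⟩⟩, by fun_prop⟩

/-- The inclusion of `A × Y` into the wedge `X × i_Y(B) ∪ i_X(A) × Y`. -/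
def wedgeInr (iX : C(A, X)) (iY : C(B, Y)) :
    C(A × Y, wedgeSet (Set.range iX) (Set.range iY)) :=
  ⟨fun p => ⟨(iX p.1, p.2), .inl ⟨p.1, rfl⟩⟩, by fun_prop⟩

theorem isGluing_wedge {iX : C(A, X)} {iY : C(B, Y)} (hX : IsClosedEmbedding iX)
    (hY : IsClosedEmbedding iY) :
    IsGluing (iX.prodMap (.id B)) (.prodMap (.id A) iY) (wedgeInl iX iY) (wedgeInr iX iY) := by
  refine .of_isClosedEmbedding (.of_comp .subtypeVal (IsClosedEmbedding.id.prodMap hY))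
    (.of_comp .subtypeVal (hX.prodMap .id)) ?_ (fun _ => rfl) ?_
  · rintro ⟨⟨x, y⟩, ⟨a, ha⟩ | ⟨b, hb⟩⟩
    · exact .inr ⟨(a, y), Subtype.ext (Prod.ext ha rfl)⟩
    · exact .inl ⟨(x, b), Subtype.ext (Prod.ext rfl hb)⟩
  · rintro ⟨x, b⟩ ⟨a, y⟩ h
    obtain ⟨rfl, rfl⟩ : x = iX a ∧ iY b = y := Prod.ext_iff.1 (congrArg Subtype.val h)
    exact ⟨(a, b), rfl, rfl⟩

theorem isGluing_extSmash {iX : C(A, X)} {pX : C(X, A)} (hX : ∀ a, pX (iX a) = a) {iY : C(B, Y)}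
    {pY : C(Y, B)} (hY : ∀ b, pY (iY b) = b) :
    IsGluing (wedgeIncl iX iY) ((pX.prodMap pY).comp (wedgeIncl iX iY))
      (⟨Quot.mk _, continuous_quot_mk⟩ : C(X × Y, ExtSmash iX pX iY pY))
      (extSmashSection iX pX iY pY) := by
  have hwedge {x : X} {y : Y} {c : A × B} (h : (x, y) ∈ wedgeSet (Set.range iX) (Set.range iY))
      (hc : (pX x, pY y) = c) :
      Relation.EqvGen (GlueRel (wedgeIncl iX iY) ((pX.prodMap pY).comp (wedgeIncl iX iY)))
        (Sum.inl (x, y)) (Sum.inr c) := .rel _ _ ⟨⟨_, h⟩, rfl, congrArg _ hc.symm⟩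
  refine .of_quot (s := iX.prodMap iY) ?_ ?_ fun c =>
    hwedge (.inl ⟨c.1, rfl⟩) (Prod.ext (hX c.1) (hY c.2))
  · rintro ⟨⟨x, y⟩, ⟨a, rfl : iX a = x⟩ | ⟨b, rfl : iY b = y⟩⟩
    · exact Quot.sound (.inr ⟨a, y, rfl, Prod.ext (congrArg iX (hX a)) rfl⟩)
    · exact Quot.sound (.inl ⟨x, b, rfl, Prod.ext rfl (congrArg iY (hY b))⟩)
  · rintro _ _ (⟨x, b, rfl, rfl⟩ | ⟨a, y, rfl, rfl⟩)
    · exact .trans _ _ _ (hwedge (.inr ⟨b, rfl⟩) rfl)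
        (.symm _ _ (hwedge (.inr ⟨b, rfl⟩) (Prod.ext (hX _) rfl)))
    · exact .trans _ _ _ (hwedge (.inl ⟨a, rfl⟩) rfl)
        (.symm _ _ (hwedge (.inl ⟨a, rfl⟩) (Prod.ext rfl (hY _))))

variable {X' Y' : Type*} [TopologicalSpace X'] [TopologicalSpace Y']

/-- The map of wedges induced by maps `f` and `g` compatible with the sections. -/
def wedgeMap {iX : C(A, X)} {iY : C(B, Y)} {iX' : C(A, X')} {iY' : C(B, Y')} (f : C(X, X'))
    (g : C(Y, Y')) (hf : ∀ a, f (iX a) = iX' a) (hg : ∀ b, g (iY b) = iY' b) :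
    C(wedgeSet (Set.range iX) (Set.range iY), wedgeSet (Set.range iX') (Set.range iY')) :=
  ⟨fun p => ⟨(f p.1.1, g p.1.2), p.2.imp (fun ⟨a, ha⟩ => ⟨a, by rw [← hf, ha]⟩)
    fun ⟨b, hb⟩ => ⟨b, by rw [← hg, hb]⟩⟩, by fun_prop⟩

theorem isWeakHomotopyEquiv_wedgeMap {iX : C(A, X)} {iY : C(B, Y)} {iX' : C(A, X')}
    {iY' : C(B, Y')} (hX : IsHCofibration iX) (hY : IsHCofibration iY) (hX' : IsHCofibration iX')
    (hY' : IsHCofibration iY') {f : C(X, X')} {g : C(Y, Y')} (hf : IsWeakHomotopyEquiv f)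
    (hg : IsWeakHomotopyEquiv g) (hfi : ∀ a, f (iX a) = iX' a) (hgi : ∀ b, g (iY b) = iY' b) :
    IsWeakHomotopyEquiv (wedgeMap f g hfi hgi) :=
  (isGluing_wedge hX.1 hY.1).isWeakHomotopyEquiv (isGluing_wedge hX'.1 hY'.1)
    hX.prodMap_id hX'.prodMap_id (fZ := f.prodMap (.id B)) (fL := .id (A × B))
    (fC := .prodMap (.id A) g) (fun l => Prod.ext (hfi l.1) rfl) (fun l => Prod.ext rfl (hgi l.2))
    (hf.prodMap .id) .id (.prodMap .id hg) (fun p => Subtype.ext (Prod.ext rfl (hgi p.2)))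
    fun p => Subtype.ext (Prod.ext (hfi p.1) rfl)

end ExternalSmash

theorem isWeakHomotopyEquiv_extSmashMap_id_general
    {A B X X' Y Y' : Type*} [TopologicalSpace A] [TopologicalSpace B] [TopologicalSpace X]
    [TopologicalSpace X'] [TopologicalSpace Y] [TopologicalSpace Y']
    (iX : C(A, X)) (pX : C(X, A)) (hXr : ∀ a, pX (iX a) = a)
    (iX' : C(A, X')) (pX' : C(X', A)) (hX'r : ∀ a, pX' (iX' a) = a)
    (iY : C(B, Y)) (pY : C(Y, B)) (hYr : ∀ b, pY (iY b) = b)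
    (iY' : C(B, Y')) (pY' : C(Y', B)) (hY'r : ∀ b, pY' (iY' b) = b)
    (hXi : IsHCofibration iX) (hX'i : IsHCofibration iX')
    (hYi : IsHCofibration iY) (hY'i : IsHCofibration iY')
    (f : C(X, X')) (hfi : ∀ a, f (iX a) = iX' a) (hfp : ∀ x, pX' (f x) = pX x)
    (hf : IsWeakHomotopyEquiv f)
    (g : C(Y, Y')) (hgi : ∀ b, g (iY b) = iY' b) (hgp : ∀ y, pY' (g y) = pY y)
    (hg : IsWeakHomotopyEquiv g) :
    IsWeakHomotopyEquiv (extSmashMap iX pX iY pY iX' pX' iY' pY' f g hfi hfp hgi hgp) := by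
  have hwedge : IsWeakHomotopyEquiv (wedgeMap f g hfi hgi) :=
    isWeakHomotopyEquiv_wedgeMap hXi hYi hX'i hY'i hf hg hfi hgi
  have hproj (p : wedgeSet (Set.range iX) (Set.range iY)) :
      (pX p.1.1, pY p.1.2) = (pX' (f p.1.1), pY' (g p.1.2)) :=
    Prod.ext (hfp _).symm (hgp _).symm
  have hsection (c : A × B) : (f (iX c.1), g (iY c.2)) = (iX' c.1, iY' c.2) :=
    Prod.ext (hfi c.1) (hgi c.2)
  exact (isGluing_extSmash hXr hYr).isWeakHomotopyEquiv (isGluing_extSmash hX'r hY'r)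
    (isHCofibration_wedgeIncl hXi hYi) (isHCofibration_wedgeIncl hX'i hY'i)
    (fun _ => rfl) hproj (hf.prodMap hg) hwedge .id (fun _ => rfl)
    fun c => congrArg (Quot.mk _) (hsection c)

/-- If `X` is a retractive space over `A` with h-cofibrant section, and `g : Y → Y'` is a weak
equivalence of retractive spaces over `B` with h-cofibrant sections, then
`id_X ⊼ g : X ⊼ Y → X ⊼ Y'` is a weak equivalence. -/
theorem isWeakHomotopyEquiv_extSmashMap_id
    {A B X Y Y' : Type*} [TopologicalSpace A] [TopologicalSpace B]
    [TopologicalSpace X] [TopologicalSpace Y] [TopologicalSpace Y']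
    (iX : C(A, X)) (pX : C(X, A)) (hXr : ∀ a, pX (iX a) = a)
    (iY : C(B, Y)) (pY : C(Y, B)) (hYr : ∀ b, pY (iY b) = b)
    (iY' : C(B, Y')) (pY' : C(Y', B)) (hY'r : ∀ b, pY' (iY' b) = b)
    (hXi : IsHCofibration iX) (hYi : IsHCofibration iY) (hY'i : IsHCofibration iY')
    (g : C(Y, Y')) (hgi : ∀ b, g (iY b) = iY' b) (hgp : ∀ y, pY' (g y) = pY y)
    (hg : IsWeakHomotopyEquiv g) :
    IsWeakHomotopyEquiv
      (extSmashMap iX pX iY pY iX pX iY' pY' (ContinuousMap.id X) g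
        (fun _ => rfl) (fun _ => rfl) hgi hgp) :=
  isWeakHomotopyEquiv_extSmashMap_id_general iX pX hXr iX pX hXr iY pY hYr iY' pY' hY'r
    hXi hXi hYi hY'i (.id X) (fun _ => rfl) (fun _ => rfl) .id g hgi hgp hg
end
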